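/- arXiv:1503.04629 — 2 statements merged into one kernel-verified Lean document; each statement's English description precedes it below -/
import Mathlib

section
/- Assertion (2) of Theorem A. Assume ε ≥ 0 and that P_ε satisfies hypotheses (H1) and (H2). Then for each ℓ,k ∈ ℤ⁺, each λ₀ > 0 and every compact set K_a ⊂ A there exists ε₀ > 0 such that the fundamental homogeneous solution can be written as D(s+ϑ_ε; ε,a,λ) = s^ℓ·h_ℓ(s; ε,a,λ), where Θ_λ^r h_ℓ(s) → 0 as s → 0⁺, uniformly on 𝒜 := [0,ε₀] × K_a × [λ₀,∞), for every r = 0,1,…,k. -/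
open Set Filter Topology Real intervalIntegral

noncomputable section

/-- The differential operator `Θ_λ = (1/λ)·s·∂_s`. -/
def Theta (lam : ℝ) (f : ℝ → ℝ) : ℝ → ℝ :=
  fun s => (1 / lam) * s * deriv f s

/-- The fundamental solution `D(x;ε,a,λ) = exp(λ∫₁ˣ V_a(t)/P_ε(t) dt)` of the homogeneous
linear equation `P_ε(x)y′ = λV_a(x)y`; it coincides with the Dulac map of the saddle
`(ϑ_ε,0)` of `P_ε(x)∂_x − λV_a(x)y∂_y`. -/
def Dfun {E : Type*} (P : ℝ → ℝ → ℝ) (V : E → ℝ → ℝ) (x ε : ℝ) (a : E) (lam : ℝ) : ℝ :=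
  Real.exp (lam * ∫ t in (1 : ℝ)..x, V a t / P t ε)


def Tame {I : Type*} (R : ℝ) : ℕ → (I → ℝ → ℝ) → Prop
  | 0, f => ∃ C : ℝ, ∃ M : ℕ, 0 ≤ C ∧ ∀ i, ∀ s ∈ Ioo 0 R, |f i s| ≤ C / s ^ M
  | n + 1, f => (∃ C : ℝ, ∃ M : ℕ, 0 ≤ C ∧ ∀ i, ∀ s ∈ Ioo 0 R, |f i s| ≤ C / s ^ M) ∧
      ∃ f' : I → ℝ → ℝ, (∀ i, ∀ s ∈ Ioo 0 R, HasDerivAt (f i) (f' i s) s) ∧ Tame R n f'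

theorem Tame.bd {I : Type*} {R : ℝ} {n : ℕ} {f : I → ℝ → ℝ} (h : Tame R n f) :
    ∃ C : ℝ, ∃ M : ℕ, 0 ≤ C ∧ ∀ i, ∀ s ∈ Ioo 0 R, |f i s| ≤ C / s ^ M := by
  cases n with
  | zero => exact h
  | succ n => exact h.1

theorem Tame.mono {I : Type*} {R : ℝ} {n : ℕ} : ∀ {f : I → ℝ → ℝ}, Tame R (n+1) f → Tame R n f := by
  induction n with
  | zero => intro f h; exact h.1
  | succ n ih =>
    rintro f ⟨hb, f', hd, ht⟩
    exact ⟨hb, f', hd, ih ht⟩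

theorem Tame.add {I : Type*} {R : ℝ} (hR : R ≤ 1) {n : ℕ} : ∀ {f g : I → ℝ → ℝ}, Tame R n f → Tame R n g →
    Tame R n (fun i s => f i s + g i s) := by
  have key : ∀ {f g : I → ℝ → ℝ}, (∃ C : ℝ, ∃ M : ℕ, 0 ≤ C ∧ ∀ i, ∀ s ∈ Ioo 0 R, |f i s| ≤ C / s ^ M) →
      (∃ C : ℝ, ∃ M : ℕ, 0 ≤ C ∧ ∀ i, ∀ s ∈ Ioo 0 R, |g i s| ≤ C / s ^ M) →
      (∃ C : ℝ, ∃ M : ℕ, 0 ≤ C ∧ ∀ i, ∀ s ∈ Ioo 0 R, |f i s + g i s| ≤ C / s ^ M) := by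
    rintro f g ⟨C, M, hC, h⟩ ⟨C', M', hC', h'⟩
    refine ⟨C + C', M + M', by positivity, fun i s hs => ?_⟩
    have h1 := h i s hs
    have h2 := h' i s hs
    have hs0 : 0 < s := hs.1
    have hs1 : s ≤ 1 := hs.2.le.trans hR
    have e1 : C / s ^ M ≤ C / s ^ (M + M') :=
      div_le_div_of_nonneg_left hC (by positivity) (pow_le_pow_of_le_one hs0.le hs1 (by omega))
    have e2 : C' / s ^ M' ≤ C' / s ^ (M + M') :=
      div_le_div_of_nonneg_left hC' (by positivity) (pow_le_pow_of_le_one hs0.le hs1 (by omega))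
    rw [add_div]
    exact (abs_add_le _ _).trans (by linarith)
  induction n with
  | zero => intro f g hf hg; exact key hf hg
  | succ n ih =>
    rintro f g ⟨hb, f', hd, ht⟩ ⟨hb', g', hd', ht'⟩
    exact ⟨key hb hb', _, fun i s hs => (hd i s hs).add (hd' i s hs), ih ht ht'⟩

theorem Tame.mul {I : Type*} {R : ℝ} (hR : R ≤ 1) {n : ℕ} : ∀ {f g : I → ℝ → ℝ}, Tame R n f → Tame R n g →
    Tame R n (fun i s => f i s * g i s) := by
  have key : ∀ {f g : I → ℝ → ℝ}, (∃ C : ℝ, ∃ M : ℕ, 0 ≤ C ∧ ∀ i, ∀ s ∈ Ioo 0 R, |f i s| ≤ C / s ^ M) →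
      (∃ C : ℝ, ∃ M : ℕ, 0 ≤ C ∧ ∀ i, ∀ s ∈ Ioo 0 R, |g i s| ≤ C / s ^ M) →
      (∃ C : ℝ, ∃ M : ℕ, 0 ≤ C ∧ ∀ i, ∀ s ∈ Ioo 0 R, |f i s * g i s| ≤ C / s ^ M) := by
    rintro f g ⟨C, M, hC, h⟩ ⟨C', M', hC', h'⟩
    refine ⟨C * C', M + M', by positivity, fun i s hs => ?_⟩
    have h1 := h i s hs
    have h2 := h' i s hs
    have hs0 : 0 < s := hs.1
    rw [abs_mul, pow_add, mul_div_mul_comm]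
    exact mul_le_mul h1 h2 (abs_nonneg _) (by positivity)
  induction n with
  | zero => intro f g hf hg; exact key hf hg
  | succ n ih =>
    rintro f g ⟨hb, f', hd, ht⟩ ⟨hb', g', hd', ht'⟩
    refine ⟨key hb hb', _, fun i s hs => (hd i s hs).mul (hd' i s hs), ?_⟩
    exact Tame.add hR (ih ht (Tame.mono ⟨hb', g', hd', ht'⟩)) (ih (Tame.mono ⟨hb, f', hd, ht⟩) ht')

theorem Tame.const {I : Type*} {R : ℝ} {n : ℕ} : ∀ (c : I → ℝ) (B : ℝ), (∀ i, |c i| ≤ B) →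
    Tame R n (fun i _ => c i) := by
  induction n with
  | zero =>
    intro c B h
    exact ⟨|B|, 0, abs_nonneg _, fun i s hs => by simpa using (h i).trans (le_abs_self B)⟩
  | succ n ih =>
    intro c B h
    exact ⟨⟨|B|, 0, abs_nonneg _, fun i s hs => by simpa using (h i).trans (le_abs_self B)⟩,
      fun _ _ => 0, fun i s _ => hasDerivAt_const s (c i), ih (fun _ => 0) 0 (by simp)⟩

theorem Tame.id {I : Type*} {R : ℝ} (hR : R ≤ 1) {n : ℕ} : Tame R n (fun (_ : I) s => s) := by
  have : ∃ C : ℝ, ∃ M : ℕ, 0 ≤ C ∧ ∀ i : I, ∀ s ∈ Ioo 0 R, |s| ≤ C / s ^ M :=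
    ⟨1, 0, zero_le_one, fun i s hs => by rw [abs_of_pos hs.1]; simpa using hs.2.le.trans hR⟩
  cases n with
  | zero => exact this
  | succ n => exact ⟨this, fun _ _ => 1, fun i s _ => hasDerivAt_id s, Tame.const (fun _ => 1) 1 (by simp)⟩

theorem Tame.inv {I : Type*} {R : ℝ} (hR : R ≤ 1) {n : ℕ} {f : I → ℝ → ℝ} {c : ℝ} {M : ℕ} (hc : 0 < c)
    (hlow : ∀ i, ∀ s ∈ Ioo 0 R, c * s ^ M ≤ f i s) : Tame R n f →
    Tame R n (fun i s => (f i s)⁻¹) := by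
  have key : (∃ C : ℝ, ∃ M : ℕ, 0 ≤ C ∧ ∀ i, ∀ s ∈ Ioo 0 R, |(f i s)⁻¹| ≤ C / s ^ M) := by
    refine ⟨c⁻¹, M, by positivity, fun i s hs => ?_⟩
    have h1 := hlow i s hs
    have hs0 : 0 < s := hs.1
    have h0 : 0 < c * s ^ M := by positivity
    rw [abs_of_pos (inv_pos.2 (h0.trans_le h1)), div_eq_mul_inv, ← mul_inv]
    exact inv_anti₀ h0 h1
  induction n with
  | zero => intro _; exact key
  | succ n ih =>
    intro ht
    have hi := ih ht.mono
    obtain ⟨hb, f', hd, ht'⟩ := ht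
    refine ⟨key, fun i s => -1 * (f' i s * ((f i s)⁻¹ * (f i s)⁻¹)), fun i s hs => ?_, ?_⟩
    · have hs0 : 0 < s := hs.1
      have h0 : 0 < c * s ^ M := by positivity
      have hne : f i s ≠ 0 := (h0.trans_le (hlow i s hs)).ne'
      refine ((hd i s hs).inv hne).congr_deriv ?_
      field_simp
    · exact Tame.mul hR (Tame.const (fun _ => -1) 1 (by simp)) (Tame.mul hR ht' (Tame.mul hR hi hi))

theorem Tame.analytic {I X : Type*} [NormedAddCommGroup X] [NormedSpace ℝ X] {R : ℝ} {n : ℕ}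
    {L : Set X} (hL : IsCompact L) (y : I → X) (w : X)
    (hy : ∀ i, ∀ s ∈ Ioo 0 R, y i + s • w ∈ L) :
    ∀ (G : X → ℝ), (∀ z ∈ L, AnalyticAt ℝ G z) → Tame R n (fun i s => G (y i + s • w)) := by
  have key : ∀ (G : X → ℝ), (∀ z ∈ L, AnalyticAt ℝ G z) → ∃ C : ℝ, ∃ M : ℕ, 0 ≤ C ∧
      ∀ i, ∀ s ∈ Ioo 0 R, |G (y i + s • w)| ≤ C / s ^ M := by
    intro G hG
    obtain ⟨C, hC⟩ := hL.exists_bound_of_continuousOn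
      (f := G) (fun z hz => (hG z hz).continuousAt.continuousWithinAt)
    refine ⟨|C|, 0, abs_nonneg _, fun i s hs => ?_⟩
    simpa using (hC _ (hy i s hs)).trans (le_abs_self C)
  induction n with
  | zero => exact key
  | succ n ih =>
    intro G hG
    refine ⟨key G hG, fun i s => fderiv ℝ G (y i + s • w) w, fun i s hs => ?_, ?_⟩
    · have h1 : HasDerivAt (fun s : ℝ => y i + s • w) w s := by
        simpa using ((hasDerivAt_id s).smul_const w).const_add (y i)
      exact (hG _ (hy i s hs)).differentiableAt.hasFDerivAt.comp_hasDerivAt s h1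
    · exact ih (fun z => fderiv ℝ G z w) (fun z hz =>
        ((ContinuousLinearMap.apply ℝ ℝ w).analyticAt _).comp (hG z hz).fderiv)

theorem Q_lower (μ ν : ℕ) (hμ : 0 < μ) (hν : 0 < ν) (Q : ℝ → ℝ → ℝ) (q : ℕ → ℕ → ℝ)
    (hqsum : ∀ᶠ z : ℝ × ℝ in 𝓝 (0, 0),
      HasSum (fun ij : ℕ × ℕ => q ij.1 ij.2 * z.1 ^ ij.1 * z.2 ^ ij.2) (Q z.1 z.2))
    (hH1 : ∀ (i j : ℕ), q i j ≠ 0 → 1 ≤ (i : ℝ) / μ + (j : ℝ) / ν)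
    (hH2 : ∀ θ ∈ Icc (0 : ℝ) (π / 2),
      0 < ∑ i ∈ Finset.range (μ + 1), ∑ j ∈ Finset.range (ν + 1),
        (if (i : ℝ) / μ + (j : ℝ) / ν = 1 then q i j * sin θ ^ i * cos θ ^ j else 0)) :
    ∃ c > 0, ∃ r > 0, ∀ s e : ℝ, 0 < s → s ≤ r → 0 ≤ e → e ≤ r → c * s ^ μ ≤ Q s e := by
  have hμr : (0:ℝ) < μ := by exact_mod_cast hμ
  have hνr : (0:ℝ) < ν := by exact_mod_cast hν
  -- translate the weight condition
  have hw1 : ∀ i j : ℕ, ((i : ℝ) / μ + (j : ℝ) / ν = 1 ↔ ν * i + μ * j = μ * ν) := by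
    intro i j
    rw [div_add_div _ _ hμr.ne' hνr.ne', div_eq_one_iff_eq (by positivity)]
    constructor
    · intro h
      have : ((ν * i + μ * j : ℕ) : ℝ) = ((μ * ν : ℕ) : ℝ) := by push_cast; linarith
      exact_mod_cast this
    · intro h
      have : ((ν * i + μ * j : ℕ) : ℝ) = ((μ * ν : ℕ) : ℝ) := by exact_mod_cast h
      push_cast at this; linarith
  have hw2 : ∀ i j : ℕ, q i j ≠ 0 → μ * ν ≤ ν * i + μ * j := by
    intro i j h
    have := hH1 i j h
    rw [div_add_div _ _ hμr.ne' hνr.ne', one_le_div (by positivity)] at this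
    have : ((μ * ν : ℕ) : ℝ) ≤ ((ν * i + μ * j : ℕ) : ℝ) := by push_cast; linarith
    exact_mod_cast this
  set Q0 : ℝ → ℝ → ℝ := fun u v => ∑ i ∈ Finset.range (μ + 1), ∑ j ∈ Finset.range (ν + 1),
        (if (i : ℝ) / μ + (j : ℝ) / ν = 1 then q i j * u ^ i * v ^ j else 0) with hQ0
  -- min on the circle
  obtain ⟨m, hm0, hm⟩ : ∃ m > 0, ∀ θ ∈ Icc (0:ℝ) (π/2), m ≤ Q0 (sin θ) (cos θ) := by
    have hcont : Continuous (fun θ => Q0 (sin θ) (cos θ)) := by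
      simp only [hQ0]
      refine continuous_finsetSum _ fun i _ => continuous_finsetSum _ fun j _ => ?_
      split_ifs <;> fun_prop
    obtain ⟨θ, hθ, hmin⟩ := (isCompact_Icc (a := (0:ℝ)) (b := π/2)).exists_isMinOn
      ⟨0, by constructor <;> positivity⟩ hcont.continuousOn
    exact ⟨_, hH2 θ hθ, fun θ' hθ' => hmin hθ'⟩
  -- radius
  obtain ⟨r, hr0, hr⟩ := Metric.eventually_nhds_iff.1 hqsum
  have hsum : ∀ s e : ℝ, |s| < r → |e| < r → HasSum (fun ij : ℕ × ℕ => q ij.1 ij.2 * s ^ ij.1 * e ^ ij.2) (Q s e) := by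
    intro s e hs he
    refine hr (y := (s, e)) ?_
    rw [Prod.dist_eq]
    simpa using ⟨hs, he⟩
  obtain ⟨t0, ht00, ht01, ht0r⟩ : ∃ t0 : ℝ, 0 < t0 ∧ t0 ≤ 1 ∧ t0 < r :=
    ⟨min 1 (r/2), by positivity, min_le_left _ _, (min_le_right _ _).trans_lt (by linarith)⟩
  have hpw : ∀ n : ℕ, 0 < n → t0 ^ n ≤ t0 := fun n hn => pow_le_of_le_one ht00.le ht01 hn.ne'
  have hS0 := (hsum (t0 ^ ν) (t0 ^ μ) (by rw [abs_of_pos (by positivity)]; exact (hpw ν hν).trans_lt ht0r)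
    (by rw [abs_of_pos (by positivity)]; exact (hpw μ hμ).trans_lt ht0r)).summable.abs
  set S := ∑' ij : ℕ × ℕ, |q ij.1 ij.2 * (t0 ^ ν) ^ ij.1 * (t0 ^ μ) ^ ij.2| with hSdef
  have hSn : 0 ≤ S := tsum_nonneg fun _ => abs_nonneg _
  -- remainder
  have hrem : ∀ τ θ : ℝ, 0 < τ → τ ≤ t0 → θ ∈ Icc (0:ℝ) (π/2) →
      |Q (τ ^ ν * sin θ) (τ ^ μ * cos θ) - τ ^ (μ * ν) * Q0 (sin θ) (cos θ)| ≤ (τ / t0) ^ (μ * ν + 1) * S := by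
    intro τ θ hτ hτt hθ
    have hsin0 : 0 ≤ sin θ := sin_nonneg_of_nonneg_of_le_pi hθ.1 (by linarith [hθ.2, pi_pos])
    have hcos0 : 0 ≤ cos θ := cos_nonneg_of_mem_Icc ⟨by linarith [hθ.1, pi_pos], hθ.2⟩
    have hsin1 := sin_le_one θ
    have hcos1 := cos_le_one θ
    have b1 : ∀ n : ℕ, 0 < n → τ ^ n ≤ t0 := fun n hn =>
      (pow_le_pow_left₀ hτ.le hτt n).trans (hpw n hn)
    have A1 := hsum (τ ^ ν * sin θ) (τ ^ μ * cos θ)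
      (by rw [abs_of_nonneg (by positivity)]
          exact ((mul_le_of_le_one_right (by positivity) hsin1).trans (b1 ν hν)).trans_lt ht0r)
      (by rw [abs_of_nonneg (by positivity)]
          exact ((mul_le_of_le_one_right (by positivity) hcos1).trans (b1 μ hμ)).trans_lt ht0r)
    have A2 : HasSum (fun ij : ℕ × ℕ => if (ij.1 : ℝ) / μ + (ij.2 : ℝ) / ν = 1 then
        τ ^ (μ * ν) * (q ij.1 ij.2 * sin θ ^ ij.1 * cos θ ^ ij.2) else 0)
        (τ ^ (μ * ν) * Q0 (sin θ) (cos θ)) := by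
      have : τ ^ (μ * ν) * Q0 (sin θ) (cos θ) = ∑ ij ∈ Finset.range (μ + 1) ×ˢ Finset.range (ν + 1),
          (if (ij.1 : ℝ) / μ + (ij.2 : ℝ) / ν = 1 then
        τ ^ (μ * ν) * (q ij.1 ij.2 * sin θ ^ ij.1 * cos θ ^ ij.2) else 0) := by
        rw [Finset.sum_product]
        simp only [hQ0, Finset.mul_sum, mul_ite, mul_zero]
      rw [this]
      refine hasSum_sum_of_ne_finset_zero fun ij hij => ?_
      rw [if_neg]
      intro h
      rw [hw1] at h
      apply hij
      simp only [Finset.mem_product, Finset.mem_range]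
      constructor
      · by_contra hcon
        have : ν * (μ + 1) ≤ ν * ij.1 := Nat.mul_le_mul_left _ (by omega)
        nlinarith
      · by_contra hcon
        have : μ * (ν + 1) ≤ μ * ij.2 := Nat.mul_le_mul_left _ (by omega)
        nlinarith
    have A3 := A1.sub A2
    rw [← A3.tsum_eq, ← Real.norm_eq_abs]
    refine tsum_of_norm_bounded (hS0.hasSum.mul_left ((τ / t0) ^ (μ * ν + 1))) fun ij => ?_
    obtain ⟨i, j⟩ := ij
    have e1 : (τ ^ ν * sin θ) ^ i * (τ ^ μ * cos θ) ^ j = τ ^ (ν * i + μ * j) * (sin θ ^ i * cos θ ^ j) := by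
      rw [mul_pow, mul_pow, ← pow_mul, ← pow_mul, pow_add]; ring
    have e2 : (t0 ^ ν) ^ i * (t0 ^ μ) ^ j = t0 ^ (ν * i + μ * j) := by
      rw [← pow_mul, ← pow_mul, pow_add]
    simp only [Real.norm_eq_abs]
    rw [mul_assoc, e1, mul_assoc (q i j) _ ((t0 ^ μ) ^ j), e2]
    by_cases hq : q i j = 0
    · simp [hq]
    split_ifs with hc
    · rw [hw1] at hc
      rw [hc]
      have : q i j * (τ ^ (μ * ν) * (sin θ ^ i * cos θ ^ j)) - τ ^ (μ * ν) * (q i j * sin θ ^ i * cos θ ^ j) = 0 := by ring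
      rw [this, abs_zero]
      positivity
    · have hlt : μ * ν + 1 ≤ ν * i + μ * j := by
        have h1 := hw2 i j hq
        rw [hw1] at hc
        omega
      rw [sub_zero, abs_mul (q i j), abs_mul (q i j), abs_of_nonneg (by positivity : 0 ≤ τ ^ (ν * i + μ * j) * (sin θ ^ i * cos θ ^ j)),
        abs_of_pos (by positivity : 0 < t0 ^ (ν * i + μ * j))]
      have f1 : sin θ ^ i * cos θ ^ j ≤ 1 := mul_le_one₀ (pow_le_one₀ hsin0 hsin1) (by positivity) (pow_le_one₀ hcos0 hcos1)
      have f2 : (τ / t0) ^ (ν * i + μ * j) ≤ (τ / t0) ^ (μ * ν + 1) :=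
        pow_le_pow_of_le_one (by positivity) ((div_le_one ht00).2 hτt) hlt
      calc |q i j| * (τ ^ (ν * i + μ * j) * (sin θ ^ i * cos θ ^ j))
          ≤ |q i j| * (τ ^ (ν * i + μ * j) * 1) := by gcongr
        _ = (τ / t0) ^ (ν * i + μ * j) * (|q i j| * t0 ^ (ν * i + μ * j)) := by
            rw [div_pow]; field_simp
        _ ≤ _ := by gcongr
  -- choose threshold T for τ
  obtain ⟨T, hT0, hTt, hT⟩ : ∃ T > 0, T ≤ t0 ∧ T * (S / t0 ^ (μ * ν + 1)) ≤ m / 2 := by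
    refine ⟨min t0 (m / 2 / (S / t0 ^ (μ * ν + 1) + 1)), by positivity, min_le_left _ _, ?_⟩
    have hX : 0 ≤ S / t0 ^ (μ * ν + 1) := by positivity
    calc _ ≤ m / 2 / (S / t0 ^ (μ * ν + 1) + 1) * (S / t0 ^ (μ * ν + 1) + 1) := by
          gcongr
          · exact min_le_right _ _
          · linarith
      _ = m / 2 := by field_simp
  have main : ∀ τ θ : ℝ, 0 < τ → τ ≤ T → θ ∈ Icc (0:ℝ) (π/2) →
      m / 2 * τ ^ (μ * ν) ≤ Q (τ ^ ν * sin θ) (τ ^ μ * cos θ) := by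
    intro τ θ hτ hτT hθ
    have h1 := hrem τ θ hτ (hτT.trans hTt) hθ
    have h2 := hm θ hθ
    have h3 : (τ / t0) ^ (μ * ν + 1) * S ≤ τ ^ (μ * ν) * (m / 2) := by
      calc (τ / t0) ^ (μ * ν + 1) * S = τ ^ (μ * ν) * (τ * (S / t0 ^ (μ * ν + 1))) := by
            rw [div_pow, pow_succ τ]; field_simp
        _ ≤ τ ^ (μ * ν) * (T * (S / t0 ^ (μ * ν + 1))) := by gcongr
        _ ≤ _ := by gcongr
    have h4 : τ ^ (μ * ν) * m ≤ τ ^ (μ * ν) * Q0 (sin θ) (cos θ) := by gcongr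
    have := (abs_le.1 h1).1
    linarith
  -- polar decomposition
  refine ⟨m / 2, by positivity, min (T ^ ν) (T ^ μ) / 2, by positivity, ?_⟩
  intro s e hs hsr he her
  obtain ⟨t, ht, hgt⟩ : ∃ t ≥ (T⁻¹:ℝ), (t ^ ν * s) ^ 2 + (t ^ μ * e) ^ 2 = 1 := by
    have hcont : Continuous (fun t : ℝ => (t ^ ν * s) ^ 2 + (t ^ μ * e) ^ 2) := by fun_prop
    have hlow : (T⁻¹ ^ ν * s) ^ 2 + (T⁻¹ ^ μ * e) ^ 2 ≤ 1 := by
      have a1 : T⁻¹ ^ ν * s ≤ 1 / 2 := by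
        rw [inv_pow, inv_mul_le_iff₀ (by positivity)]
        have := min_le_left (T ^ ν) (T ^ μ)
        linarith
      have a2 : T⁻¹ ^ μ * e ≤ 1 / 2 := by
        rw [inv_pow, inv_mul_le_iff₀ (by positivity)]
        have := min_le_right (T ^ ν) (T ^ μ)
        linarith
      have a3 : 0 ≤ T⁻¹ ^ ν * s := by positivity
      have a4 : 0 ≤ T⁻¹ ^ μ * e := by positivity
      nlinarith
    set B := max (max T⁻¹ 1) (1 / s) with hB
    have hB1 : 1 ≤ B := (le_max_right _ _).trans (le_max_left _ _)
    have hBT : T⁻¹ ≤ B := (le_max_left _ _).trans (le_max_left _ _)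
    have hBs : 1 ≤ B * s := by
      have := le_max_right (max T⁻¹ 1) (1 / s)
      rwa [div_le_iff₀ hs] at this
    have hhigh : 1 ≤ (B ^ ν * s) ^ 2 + (B ^ μ * e) ^ 2 := by
      have b1 : B ≤ B ^ ν := le_self_pow₀ hB1 hν.ne'
      have b2 : 1 ≤ B ^ ν * s := hBs.trans (by gcongr)
      nlinarith [sq_nonneg (B ^ μ * e)]
    obtain ⟨t, ht, h⟩ := intermediate_value_Icc hBT hcont.continuousOn ⟨hlow, hhigh⟩
    exact ⟨t, ht.1, h⟩
  have htpos : 0 < t := (inv_pos.2 hT0).trans_le ht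
  set u := t ^ ν * s with hu
  set v := t ^ μ * e with hv
  have hu0 : 0 ≤ u := by positivity
  have hv0 : 0 ≤ v := by positivity
  have hu1 : u ≤ 1 := by nlinarith
  have hθ : arcsin u ∈ Icc (0:ℝ) (π/2) := ⟨arcsin_nonneg.2 hu0, arcsin_le_pi_div_two u⟩
  have hsin : sin (arcsin u) = u := sin_arcsin (by linarith) hu1
  have hcos : cos (arcsin u) = v := by
    rw [cos_arcsin, show 1 - u ^ 2 = v ^ 2 by linarith, sqrt_sq hv0]
  have hfin := main t⁻¹ (arcsin u) (inv_pos.2 htpos) (by rw [inv_le_comm₀ htpos hT0]; exact ht) hθ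
  rw [hsin, hcos] at hfin
  have es : t⁻¹ ^ ν * u = s := by rw [hu, inv_pow]; field_simp
  have ee : t⁻¹ ^ μ * v = e := by rw [hv, inv_pow]; field_simp
  rw [es, ee] at hfin
  refine le_trans ?_ hfin
  gcongr
  calc s ^ μ = (t⁻¹ ^ ν * u) ^ μ := by rw [es]
    _ ≤ (t⁻¹ ^ ν * 1) ^ μ := by gcongr
    _ = t⁻¹ ^ (μ * ν) := by rw [mul_one, ← pow_mul, mul_comm]

theorem pos_of_ne {f : ℝ → ℝ} (hf : Continuous f) {θ x0 : ℝ} (hx0 : x0 ∈ Ioc θ 1) (h0 : 0 < f x0)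
    (hne : ∀ x ∈ Ioc θ 1, f x ≠ 0) : ∀ x ∈ Ioc θ 1, 0 < f x := by
  intro x hx
  by_contra hcon
  have hc : IsPreconnected (Ioc θ 1) := isPreconnected_Ioc
  obtain ⟨y, hy, h⟩ := hc.intermediate_value hx hx0 hf.continuousOn ⟨not_lt.1 hcon, h0.le⟩
  exact hne y hy h

theorem int_deriv {f : ℝ → ℝ} {θ : ℝ} (hf : ContinuousOn f (Ioc θ 1)) {x : ℝ} (hx : x ∈ Ioo θ 1) :
    HasDerivAt (fun x => ∫ t in (1:ℝ)..x, f t) (f x) x := by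
  have hfo : ContinuousOn f (Ioo θ 1) := hf.mono Ioo_subset_Ioc_self
  refine integral_hasDerivAt_right ?_ ?_ ?_
  · refine ContinuousOn.intervalIntegrable (hf.mono ?_)
    rw [uIcc_of_ge hx.2.le]
    intro y hy
    exact ⟨hx.1.trans_le hy.1, hy.2⟩
  · exact hfo.stronglyMeasurableAtFilter isOpen_Ioo x hx
  · exact hfo.continuousAt (isOpen_Ioo.mem_nhds hx)

theorem int_bound {f : ℝ → ℝ} {θ s2 N : ℝ} (hf : ContinuousOn f (Ioc θ 1))
    (hpos : ∀ x ∈ Ioc θ 1, 0 ≤ f x) (hs2 : 0 < s2) (hs2' : s2 + θ < 1)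
    (hN : ∀ s ∈ Ioc 0 s2, N / s ≤ f (s + θ)) :
    ∀ s ∈ Ioc 0 s2, ∫ t in (1:ℝ)..(s + θ), f t ≤ N * log (s / s2) := by
  have hd : ∀ s ∈ Ioc 0 s2, HasDerivAt (fun s => (∫ t in (1:ℝ)..(s + θ), f t) - N * log s)
      (f (s + θ) - N * s⁻¹) s := by
    intro s hs
    have h1 := int_deriv hf (x := s + θ) ⟨by linarith [hs.1], by linarith [hs.2]⟩
    have h2 : HasDerivAt (fun s : ℝ => s + θ) 1 s := (hasDerivAt_id s).add_const θ
    have h3 := HasDerivAt.comp s h1 h2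
    rw [mul_one] at h3
    exact h3.sub ((hasDerivAt_log hs.1.ne').const_mul N)
  have hmono : MonotoneOn (fun s => (∫ t in (1:ℝ)..(s + θ), f t) - N * log s) (Ioc 0 s2) := by
    refine monotoneOn_of_deriv_nonneg (convex_Ioc 0 s2)
      (fun s hs => (hd s hs).continuousAt.continuousWithinAt) ?_ ?_
    · intro s hs
      exact (hd s (interior_subset hs)).differentiableAt.differentiableWithinAt
    · intro s hs
      rw [(hd s (interior_subset hs)).deriv]
      have := hN s (interior_subset hs)
      rw [div_eq_mul_inv] at this
      linarith
  intro s hs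
  have h1 := hmono hs (right_mem_Ioc.2 hs2) hs.2
  simp only at h1
  have h2 : ∫ t in (1:ℝ)..(s2 + θ), f t ≤ 0 := by
    rw [integral_symm, neg_nonpos]
    refine integral_nonneg hs2'.le fun u hu => hpos u ⟨by linarith [hu.1], hu.2⟩
  rw [log_div hs.1.ne' hs2.ne']
  linarith

/-- **Assertion (2) of Theorem A of the paper.**  Consider the saddle-node unfolding
`X = P_ε(x)∂_x + (λV_a(x)y − U(x))∂_y` with `ε ≥ 0`, where `P_ε` is a polynomial of degree
`μ+1` in `x` with analytic coefficients and `P₀(x) = x^{μ+1}`, `ϑ_ε = σ(ε^{1/ρ})` is its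
biggest real root, `𝒬(s,ǫ) = P(s+σ(ǫ);ǫ^ρ)/s` satisfies hypotheses (H1) and (H2), and
`V_a(0) = 1`, `V_a > 0` on `|x| ≤ 1` for `a` in an open set `A`.  Then for each
`ℓ,k ∈ ℤ⁺`, `λ₀ > 0` and compact `K_a ⊆ A` there exists `ε₀ > 0` such that the fundamental
homogeneous solution can be written as `D(s+ϑ_ε;ε,a,λ) = s^ℓ·h_ℓ(s;ε,a,λ)` with
`Θ_λ^r h_ℓ(s) → 0` as `s → 0⁺` uniformly on `𝒜 = [0,ε₀] × K_a × [λ₀,∞)`, for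
`r = 0,1,…,k`. -/
theorem theoremA_2 {E : Type*} [NormedAddCommGroup E] [NormedSpace ℝ E]
    (μ ρ ν : ℕ) (hμ : 0 < μ) (hρ : 0 < ρ) (hν : 0 < ν)
    (A : Set E) (hA : IsOpen A)
    -- the polynomial family `P(x;ε)`, analytic in `(x,ε)`, `P₀(x) = x^{μ+1}`
    (P : ℝ → ℝ → ℝ) (p : ℕ → ℝ → ℝ)
    (hpa : ∀ i, AnalyticAt ℝ (p i) 0)
    (hPpoly : ∀ x ε : ℝ, P x ε = ∑ i ∈ Finset.range (μ + 2), p i ε * x ^ i)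
    (hP0 : ∀ x : ℝ, P x 0 = x ^ (μ + 1))
    -- the Puiseux parametrization `ϑ_ε = σ(ε^{1/ρ})` of the biggest real root of `P_ε`
    (σ : ℝ → ℝ) (hσa : AnalyticAt ℝ σ 0) (hσ0 : σ 0 = 0)
    (hroot : ∀ᶠ ε in 𝓝[≥] (0 : ℝ),
      P (σ (ε ^ (1 / (ρ : ℝ)))) ε = 0 ∧
      ∀ x ∈ Icc (-1 : ℝ) 1, σ (ε ^ (1 / (ρ : ℝ))) < x → P x ε ≠ 0)
    -- the function `𝒬(s,ǫ) = P(s+σ(ǫ);ǫ^ρ)/s`, analytic at `(0,0)`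
    (Q : ℝ → ℝ → ℝ)
    (hQdef : ∀ s e : ℝ, s * Q s e = P (s + σ e) (e ^ ρ))
    (hQa : AnalyticAt ℝ (fun z : ℝ × ℝ => Q z.1 z.2) (0, 0))
    (hQ0 : ∀ s : ℝ, Q s 0 = s ^ μ)
    -- the Taylor coefficients of `𝒬`, with `𝒬(0,ǫ) = χǫ^ν + ⋯`, `χ > 0`
    (q : ℕ → ℕ → ℝ)
    (hqsum : ∀ᶠ z : ℝ × ℝ in 𝓝 (0, 0),
      HasSum (fun ij : ℕ × ℕ => q ij.1 ij.2 * z.1 ^ ij.1 * z.2 ^ ij.2) (Q z.1 z.2))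
    (hχ : 0 < q 0 ν) (hνmin : ∀ j < ν, q 0 j = 0)
    -- hypothesis (H1)
    (hH1 : ∀ (i j : ℕ), q i j ≠ 0 → 1 ≤ (i : ℝ) / μ + (j : ℝ) / ν)
    -- hypothesis (H2)
    (hH2 : ∀ θ ∈ Icc (0 : ℝ) (π / 2),
      0 < ∑ i ∈ Finset.range (μ + 1), ∑ j ∈ Finset.range (ν + 1),
        (if (i : ℝ) / μ + (j : ℝ) / ν = 1 then q i j * sin θ ^ i * cos θ ^ j else 0))
    -- the family `V_a(x)`, analytic in `(a,x)`, with `V_a(0) = 1` and `V_a > 0`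
    (V : E → ℝ → ℝ)
    (hVa : ∀ a ∈ A, ∀ x ∈ Icc (-1 : ℝ) 1,
      AnalyticAt ℝ (fun z : E × ℝ => V z.1 z.2) (a, x))
    (hV0 : ∀ a ∈ A, V a 0 = 1)
    (hVpos : ∀ a ∈ A, ∀ x ∈ Icc (-1 : ℝ) 1, 0 < V a x) :
    ∀ ℓ k : ℕ, ∀ lam₀ : ℝ, 0 < lam₀ → ∀ Ka : Set E, IsCompact Ka → Ka ⊆ A →
      ∃ ε₀ > (0 : ℝ), ∃ h : ℝ → ℝ → E → ℝ → ℝ,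
        (∀ s ε : ℝ, ∀ a : E, ∀ lam : ℝ, 0 < s → ε ∈ Icc 0 ε₀ → a ∈ Ka → lam₀ ≤ lam →
          Dfun P V (s + σ (ε ^ (1 / (ρ : ℝ)))) ε a lam = s ^ ℓ * h s ε a lam) ∧
        (∀ r ≤ k, ∀ δ > (0 : ℝ), ∀ᶠ s in 𝓝[>] (0 : ℝ),
          ∀ ε ∈ Icc (0 : ℝ) ε₀, ∀ a ∈ Ka, ∀ lam : ℝ, lam₀ ≤ lam →
            |(Theta lam)^[r] (fun t => h t ε a lam) s| < δ) := by
  intro ℓ k lam₀ hlam₀ Ka hKa hKaA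
  obtain ⟨c, hc, r1, hr1, hQlow⟩ := Q_lower μ ν hμ hν Q q hqsum hH1 hH2
  obtain ⟨r2, hr2, hQan⟩ := Metric.eventually_nhds_iff.1 hQa.eventually_analyticAt
  obtain ⟨R, hR0, hRr1, hRr2, hR4⟩ : ∃ R : ℝ, 0 < R ∧ R ≤ r1 ∧ R < r2 ∧ R ≤ 1 / 4 :=
    ⟨min (min r1 (r2 / 2)) (1 / 4), by positivity, (min_le_left _ _).trans (min_le_left _ _),
      ((min_le_left _ _).trans (min_le_right _ _)).trans_lt (by linarith), min_le_right _ _⟩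
  have hR1 : R ≤ 1 := by linarith
  have hρr : (0:ℝ) < 1 / ρ := by positivity
  have htend : Tendsto (fun ε : ℝ => ε ^ (1 / (ρ : ℝ))) (𝓝[≥] 0) (𝓝 0) := by
    have h := (Real.continuousAt_rpow_const 0 (1 / (ρ : ℝ)) (Or.inr hρr.le)).tendsto
    rw [Real.zero_rpow hρr.ne'] at h
    exact h.mono_left nhdsWithin_le_nhds
  have htendσ : Tendsto (fun ε : ℝ => σ (ε ^ (1 / (ρ : ℝ)))) (𝓝[≥] 0) (𝓝 0) := by
    have h := hσa.continuousAt.tendsto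
    rw [hσ0] at h
    exact h.comp htend
  obtain ⟨ε1, hε1, hε1'⟩ : ∃ ε1 > (0:ℝ), ∀ ε ∈ Icc 0 ε1, ε ^ (1 / (ρ : ℝ)) ≤ R ∧
      |σ (ε ^ (1 / (ρ : ℝ)))| ≤ 1 / 4 ∧
      (∀ x ∈ Icc (-1 : ℝ) 1, σ (ε ^ (1 / (ρ : ℝ))) < x → P x ε ≠ 0) := by
    have h1 := htend.eventually (eventually_le_nhds hR0)
    have h2 : ∀ᶠ ε in 𝓝[≥] (0:ℝ), |σ (ε ^ (1 / (ρ : ℝ)))| ≤ 1 / 4 := by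
      have := htendσ.abs
      rw [abs_zero] at this
      exact this.eventually (eventually_le_nhds (by norm_num))
    obtain ⟨u, hu, hsub⟩ := mem_nhdsGE_iff_exists_Icc_subset.1 (h1.and (h2.and hroot))
    exact ⟨u, hu, fun ε hε => ⟨(hsub hε).1, (hsub hε).2.1, (hsub hε).2.2.2⟩⟩
  -- basic facts for each parameter
  have hcontP : ∀ ε, Continuous (fun x => P x ε) := by
    intro ε
    simp only [hPpoly]
    fun_prop
  have hPQ : ∀ ε ∈ Icc 0 ε1, ∀ s, P (s + σ (ε ^ (1 / (ρ : ℝ)))) ε = s * Q s (ε ^ (1 / (ρ : ℝ))) := by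
    intro ε hε s
    rw [hQdef, ← Real.rpow_natCast (ε ^ (1 / (ρ : ℝ))) ρ, ← Real.rpow_mul hε.1,
      one_div_mul_cancel (by positivity), Real.rpow_one]
  have hQlow' : ∀ ε ∈ Icc 0 ε1, ∀ s, 0 < s → s ≤ R → c * s ^ μ ≤ Q s (ε ^ (1 / (ρ : ℝ))) := by
    intro ε hε s hs hsR
    exact hQlow s _ hs (hsR.trans hRr1) (Real.rpow_nonneg hε.1 _) ((hε1' ε hε).1.trans hRr1)
  have hPpos : ∀ ε ∈ Icc 0 ε1, ∀ x ∈ Ioc (σ (ε ^ (1 / (ρ : ℝ)))) 1, 0 < P x ε := by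
    intro ε hε
    obtain ⟨h1, h2, h3⟩ := hε1' ε hε
    have h2' := abs_le.1 h2
    refine pos_of_ne (hcontP ε) (x0 := R + σ (ε ^ (1 / (ρ : ℝ)))) ⟨by linarith, by linarith⟩ ?_ ?_
    · rw [hPQ ε hε]
      have := hQlow' ε hε R hR0 le_rfl
      have h4 : 0 < c * R ^ μ := by positivity
      exact mul_pos hR0 (h4.trans_le this)
    · intro x hx
      exact h3 x ⟨by linarith [hx.1], hx.2⟩ hx.1
  have hcontf : ∀ ε ∈ Icc 0 ε1, ∀ a ∈ Ka,
      ContinuousOn (fun t => V a t / P t ε) (Ioc (σ (ε ^ (1 / (ρ : ℝ)))) 1) := by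
    intro ε hε a ha
    have h2' := abs_le.1 (hε1' ε hε).2.1
    refine ContinuousOn.div ?_ (hcontP ε).continuousOn (fun x hx => (hPpos ε hε x hx).ne')
    intro x hx
    have h1 := (hVa a (hKaA ha) x ⟨by linarith [hx.1], hx.2⟩).continuousAt
    have h3 : ContinuousAt (fun t : ℝ => (a, t)) x := by fun_prop
    exact (ContinuousAt.comp (f := fun t : ℝ => (a, t)) (g := fun z : E × ℝ => V z.1 z.2) h1 h3).continuousWithinAt
  let I := {z : ℝ × E × ℝ // z.1 ∈ Icc 0 ε1 ∧ z.2.1 ∈ Ka ∧ lam₀ ≤ z.2.2}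
  let e : I → ℝ := fun i => i.1.1 ^ (1 / (ρ : ℝ))
  let D : I → ℝ → ℝ := fun i s => Dfun P V (s + σ (e i)) i.1.1 i.1.2.1 i.1.2.2
  let W : I → ℝ → ℝ := fun i s => V i.1.2.1 (s + σ (e i)) * (Q s (e i))⁻¹
  have hQtame : ∀ n, Tame R n (fun (i : I) s => Q s (e i)) := by
    intro n
    have h := Tame.analytic (R := R) (n := n) (L := Icc (0:ℝ) R ×ˢ Icc (0:ℝ) R)
      (isCompact_Icc.prod isCompact_Icc) (fun i : I => ((0:ℝ), e i)) ((1:ℝ), (0:ℝ))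
      (by
        intro i s hs
        have h1 := hε1' _ i.2.1
        have h2 : 0 ≤ e i := Real.rpow_nonneg i.2.1.1 _
        have h3 : e i ≤ R := h1.1
        simp only [Prod.smul_mk, Prod.mk_add_mk, smul_eq_mul, mul_one, mul_zero, zero_add, add_zero]
        exact ⟨⟨hs.1.le, hs.2.le⟩, ⟨h2, h3⟩⟩)
      (fun z => Q z.1 z.2)
      (by
        rintro ⟨z1, z2⟩ ⟨⟨a1, a2⟩, ⟨b1, b2⟩⟩
        simp only at a1 a2 b1 b2
        refine hQan ?_
        rw [Prod.dist_eq]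
        simp only [dist_zero_right, Real.norm_eq_abs]
        rw [abs_of_nonneg a1, abs_of_nonneg b1]
        exact max_lt (by linarith) (by linarith))
    simpa using h
  have hVtame : ∀ n, Tame R n (fun (i : I) s => V i.1.2.1 (s + σ (e i))) := by
    intro n
    have h := Tame.analytic (R := R) (n := n) (L := Ka ×ˢ Icc (-1:ℝ) 1)
      (hKa.prod isCompact_Icc) (fun i : I => (i.1.2.1, σ (e i))) ((0:E), (1:ℝ))
      (by
        intro i s hs
        have h1 := abs_le.1 (hε1' _ i.2.1).2.1
        have h2 : -(1/4) ≤ σ (e i) := h1.1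
        have h3 : σ (e i) ≤ 1/4 := h1.2
        simp only [Prod.smul_mk, Prod.mk_add_mk, smul_eq_mul, mul_one, smul_zero, add_zero]
        exact ⟨i.2.2.1, ⟨by linarith [hs.1], by linarith [hs.2]⟩⟩)
      (fun z => V z.1 z.2)
      (by
        rintro ⟨z1, z2⟩ ⟨a1, b1⟩
        exact hVa z1 (hKaA a1) z2 b1)
    simpa [add_comm] using h
  have hWtame : ∀ n, Tame R n W := fun n => Tame.mul hR1 (hVtame n)
    (Tame.inv hR1 hc (fun i s hs => hQlow' _ i.2.1 s hs.1 hs.2.le) (hQtame n))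
  have hDderiv : ∀ i, ∀ s ∈ Ioo 0 R, HasDerivAt (D i) (D i s * (i.1.2.2 * (W i s / s))) s := by
    intro i s hs
    have h1 := abs_le.1 (hε1' _ i.2.1).2.1
    have h3 : σ (e i) ≤ 1/4 := h1.2
    have k1 := int_deriv (hcontf _ i.2.1 _ i.2.2.1) (x := s + σ (e i))
      ⟨by change σ (e i) < _; linarith [hs.1], by linarith [hs.2]⟩
    have k2 : HasDerivAt (fun s : ℝ => s + σ (e i)) 1 s := (hasDerivAt_id s).add_const _
    have k3 := ((HasDerivAt.comp s k1 k2).const_mul i.1.2.2).exp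
    refine k3.congr_deriv ?_
    have k4 : P (s + σ (e i)) i.1.1 = s * Q s (e i) := hPQ _ i.2.1 s
    simp only [Function.comp, D, Dfun, W, k4]
    rw [mul_one, div_mul_eq_div_div_swap, div_eq_mul_inv (V _ _)]
  have hlampos : ∀ i : I, 0 < i.1.2.2 := fun i => hlam₀.trans_le i.2.2.2
  let H : I → ℝ → ℝ := fun i s => D i s / s ^ ℓ
  have claim : ∀ r n : ℕ, ∃ g : I → ℝ → ℝ, Tame R n g ∧ ∀ i, ∀ s ∈ Ioo 0 R,
      (Theta i.1.2.2)^[r] (H i) s = D i s * g i s := by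
    intro r
    induction r with
    | zero =>
      intro n
      refine ⟨fun i s => (s ^ ℓ)⁻¹, ?_, fun i s hs => by simp [H, div_eq_mul_inv]⟩
      have hpow : ∀ l : ℕ, Tame R n (fun (_ : I) s => s ^ l) := by
        intro l
        induction l with
        | zero => simpa using Tame.const (I := I) (R := R) (n := n) (fun _ => 1) 1 (by simp)
        | succ l ih =>
          simp only [pow_succ]
          exact Tame.mul hR1 ih (Tame.id hR1)
      exact Tame.inv hR1 (c := 1) (M := ℓ) one_pos (fun i s hs => by simp) (hpow ℓ)
    | succ r ih =>
      intro n
      obtain ⟨g, hg, hgeq⟩ := ih (n + 1)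
      have hgn := hg.mono
      obtain ⟨-, g', hd, hg'⟩ := hg
      refine ⟨fun i s => W i s * g i s + (1 / i.1.2.2) * (s * g' i s), ?_, ?_⟩
      · refine Tame.add hR1 (Tame.mul hR1 (hWtame n) hgn) (Tame.mul hR1
          (Tame.const (fun i : I => 1 / i.1.2.2) (1 / lam₀) ?_) (Tame.mul hR1 (Tame.id hR1) hg'))
        intro i
        rw [abs_of_pos (one_div_pos.2 (hlampos i))]
        exact one_div_le_one_div_of_le hlam₀ i.2.2.2
      · intro i s hs
        rw [Function.iterate_succ_apply']
        have heq : (Theta i.1.2.2)^[r] (H i) =ᶠ[𝓝 s] fun t => D i t * g i t := by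
          filter_upwards [isOpen_Ioo.mem_nhds hs] with t ht using hgeq i t ht
        have hder : HasDerivAt (fun t => D i t * g i t) _ s := (hDderiv i s hs).mul (hd i s hs)
        simp only [Theta]
        rw [heq.deriv_eq, hder.deriv]
        have h1 := (hlampos i).ne'
        have h2 := hs.1.ne'
        field_simp
        try ring
  have claim2 : ∀ r : ℕ, ∃ C : ℝ, ∃ M : ℕ, 0 ≤ C ∧ ∀ i, ∀ s ∈ Ioo 0 R,
      |(Theta i.1.2.2)^[r] (H i) s| ≤ D i s * (C / s ^ M) := by
    intro r
    obtain ⟨g, ⟨C, M, hC, hg⟩, hgeq⟩ := claim r 0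
    refine ⟨C, M, hC, fun i s hs => ?_⟩
    have hDpos : 0 < D i s := Real.exp_pos _
    rw [hgeq i s hs, abs_mul, abs_of_pos hDpos]
    exact mul_le_mul_of_nonneg_left (hg i s hs) hDpos.le
  choose C M hC hbd using claim2
  set N : ℕ := ∑ r ∈ Finset.range (k + 1), M r + 1 with hN
  have hMN : ∀ r ≤ k, M r + 1 ≤ N := by
    intro r hr
    have := Finset.single_le_sum (f := M) (fun _ _ => Nat.zero_le _)
      (Finset.mem_range.2 (show r < k + 1 by omega))
    omega
  have hNpos : (0:ℝ) < N := by rw [hN]; positivity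
  -- lower bound of V
  obtain ⟨m, hm0, hm⟩ : ∃ m > 0, ∀ a ∈ Ka, ∀ x ∈ Icc (-1:ℝ) 1, m ≤ V a x := by
    obtain ⟨B, hB⟩ := (hKa.prod (isCompact_Icc (a := (-1:ℝ)) (b := 1))).exists_bound_of_continuousOn
      (f := fun z : E × ℝ => (V z.1 z.2)⁻¹) (by
        rintro ⟨a, x⟩ ⟨ha, hx⟩
        exact ((hVa a (hKaA ha) x hx).continuousAt.inv₀ (hVpos a (hKaA ha) x hx).ne').continuousWithinAt)
    refine ⟨(max B 1)⁻¹, by positivity, fun a ha x hx => ?_⟩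
    have h1 := hB (a, x) ⟨ha, hx⟩
    have h2 := hVpos a (hKaA ha) x hx
    rw [Real.norm_eq_abs, abs_of_pos (inv_pos.2 h2)] at h1
    exact inv_le_of_inv_le₀ h2 (h1.trans (le_max_left _ _))
  -- smallness of Q
  have hQsmall : ∀ᶠ z : ℝ × ℝ in 𝓝 (0, 0), Q z.1 z.2 < m * lam₀ / N := by
    have h := hQa.continuousAt.tendsto
    simp only [hQ0, zero_pow hμ.ne'] at h
    exact h.eventually (eventually_lt_nhds (by positivity))
  obtain ⟨r3, hr3, hQs⟩ := Metric.eventually_nhds_iff.1 hQsmall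
  obtain ⟨s2, hs20, hs2R, hs2r⟩ : ∃ s2 : ℝ, 0 < s2 ∧ s2 ≤ R ∧ s2 < r3 :=
    ⟨min R (r3 / 2), by positivity, min_le_left _ _, (min_le_right _ _).trans_lt (by linarith)⟩
  obtain ⟨ε2, hε2, hε2'⟩ : ∃ ε2 > (0:ℝ), ∀ ε ∈ Icc 0 ε2, ε ^ (1 / (ρ : ℝ)) < r3 := by
    obtain ⟨u, hu, hsub⟩ := mem_nhdsGE_iff_exists_Icc_subset.1
      (htend.eventually (eventually_lt_nhds hr3))
    exact ⟨u, hu, fun ε hε => hsub hε⟩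
  have hDbound : ∀ i : I, i.1.1 ≤ ε2 → ∀ s ∈ Ioo 0 s2, D i s ≤ (s / s2) ^ N := by
    intro i hi s hs
    have h1 := abs_le.1 (hε1' _ i.2.1).2.1
    have h2 : -(1/4) ≤ σ (e i) := h1.1
    have h3 : σ (e i) ≤ 1/4 := h1.2
    have h4 : 0 ≤ e i := Real.rpow_nonneg i.2.1.1 _
    have h5 : e i < r3 := hε2' _ ⟨i.2.1.1, hi⟩
    have hint := int_bound (θ := σ (e i)) (s2 := s2) (N := N / lam₀) (hcontf _ i.2.1 _ i.2.2.1)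
      (fun x hx => div_nonneg (hVpos _ (hKaA i.2.2.1) x
        ⟨by have := hx.1; change σ (e i) < x at this; linarith, hx.2⟩).le (hPpos _ i.2.1 x hx).le)
      hs20 (by linarith) (by
        intro t ht
        have k4 : P (t + σ (e i)) i.1.1 = t * Q t (e i) := hPQ _ i.2.1 t
        have k5 : c * t ^ μ ≤ Q t (e i) := hQlow' _ i.2.1 t ht.1 (ht.2.trans hs2R)
        have ht0 : 0 < t := ht.1
        have k6 : 0 < Q t (e i) := lt_of_lt_of_le (by positivity) k5
        have k7 : Q t (e i) < m * lam₀ / N := by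
          refine hQs (y := (t, e i)) ?_
          rw [Prod.dist_eq]
          simp only [dist_zero_right, Real.norm_eq_abs]
          rw [abs_of_pos ht0, abs_of_nonneg h4]
          exact max_lt (ht.2.trans_lt hs2r) h5
        have k8 : m ≤ V i.1.2.1 (t + σ (e i)) := hm _ i.2.2.1 _ ⟨by linarith, by linarith [ht.2]⟩
        rw [k4, div_le_div_iff₀ ht0 (by positivity)]
        rw [lt_div_iff₀ hNpos] at k7
        have k9 : N / lam₀ * Q t (e i) ≤ m := by
          rw [div_mul_eq_mul_div, div_le_iff₀ hlam₀]; linarith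
        calc N / lam₀ * (t * Q t (e i)) = (N / lam₀ * Q t (e i)) * t := by ring
          _ ≤ m * t := by gcongr
          _ ≤ _ := by gcongr) s ⟨hs.1, hs.2.le⟩
    have hq0 : 0 < s / s2 := div_pos hs.1 hs20
    have hlog : log (s / s2) ≤ 0 := log_nonpos hq0.le ((div_le_one hs20).2 hs.2.le)
    have hl : lam₀ ≤ i.1.2.2 := i.2.2.2
    have hfin : i.1.2.2 * (∫ t in (1:ℝ)..(s + σ (e i)), V i.1.2.1 t / P t i.1.1) ≤ N * log (s / s2) := by
      calc _ ≤ i.1.2.2 * (N / lam₀ * log (s / s2)) :=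
            mul_le_mul_of_nonneg_left hint (hlampos i).le
        _ ≤ lam₀ * (N / lam₀ * log (s / s2)) := by
            refine mul_le_mul_of_nonpos_right hl ?_
            exact mul_nonpos_of_nonneg_of_nonpos (by positivity) hlog
        _ = N * log (s / s2) := by field_simp
    calc D i s ≤ exp (N * log (s / s2)) := Real.exp_le_exp.2 hfin
      _ = (s / s2) ^ N := by rw [Real.exp_nat_mul, Real.exp_log hq0]
  refine ⟨min ε1 ε2, lt_min hε1 hε2,
    fun s ε a lam => Dfun P V (s + σ (ε ^ (1 / (ρ : ℝ)))) ε a lam / s ^ ℓ, ?_, ?_⟩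
  · intro s ε a lam hs _ _ _
    field_simp
  · intro r hr δ hδ
    have hlim : Tendsto (fun s : ℝ => C r / s2 ^ N * s) (𝓝[>] 0) (𝓝 0) := by
      have : Tendsto (fun s : ℝ => C r / s2 ^ N * s) (𝓝 0) (𝓝 (C r / s2 ^ N * 0)) :=
        tendsto_id.const_mul _
      rw [mul_zero] at this
      exact this.mono_left nhdsWithin_le_nhds
    filter_upwards [hlim.eventually (eventually_lt_nhds hδ), Ioo_mem_nhdsGT hs20] with s hs1 hs
    intro ε hε a ha lam hlam
    let i : I := ⟨(ε, a, lam), ⟨hε.1, hε.2.trans (min_le_left _ _)⟩, ha, hlam⟩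
    have hb := hbd r i s ⟨hs.1, hs.2.trans_le hs2R⟩
    have hD := hDbound i (hε.2.trans (min_le_right _ _)) s hs
    have hs0 : 0 < s := hs.1
    have hCr := hC r
    have hs1' : s ≤ 1 := by linarith [hs.2]
    refine lt_of_le_of_lt (hb.trans ?_) hs1
    calc D i s * (C r / s ^ M r) ≤ (s / s2) ^ N * (C r / s ^ M r) := by gcongr
      _ = C r / s2 ^ N * (s ^ N / s ^ M r) := by rw [div_pow]; ring
      _ ≤ C r / s2 ^ N * s := by
          gcongr
          rw [div_le_iff₀ (by positivity), ← pow_succ']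
          exact pow_le_pow_of_le_one hs0.le hs1' (hMN r hr)

end
end

section
/- Lemma 2.7 (basis of induction for Theorem A(1)). Assume ε ≥ 0 and that P_ε satisfies (H1) and (H2). For each ℓ ∈ ℤ⁺, each λ₀ > 0 and every pair of compact sets K_x ⊂ (0,1], K_a ⊂ A, there exists ε₀ > 0 such that the remainder h_ℓ(s) := (𝒯(s) − Σ_ℓ(s))/s^ℓ, where 𝒯(s) := y_L(s+ϑ_ε; x₀,ε,a,λ,U), tends to zero as s → 0⁺, uniformly on K_x × [0,ε₀] × K_a × [λ₀,∞) × 𝒰₁ (x₀ ∈ K_x, a ∈ K_a, λ ≥ λ₀, U ∈ 𝒰₁). -/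
open Set Filter Topology Real intervalIntegral

noncomputable section

/-- The Banach space `𝒰` of real power series with radius of convergence greater than `1`,
with norm `‖U‖ = Σ|u_j|`. -/
structure SeriesU where
  u : ℕ → ℝ
  radius_gt_one : ∃ r : ℝ, 1 < r ∧ Summable fun j => |u j| * r ^ j

/-- The norm `‖U‖ = Σ_{j≥0} |u_j|` on `𝒰`. -/
def SeriesU.norm (U : SeriesU) : ℝ := ∑' j, |U.u j|

/-- Evaluation of `U ∈ 𝒰` at a point `x`. -/
def SeriesU.eval (U : SeriesU) (x : ℝ) : ℝ := ∑' j, U.u j * x ^ j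

/-- The linear finite-difference operator `∇`:
`(∇f)(s) = (f(s) − f(0))/s` for `s ≠ 0` and `(∇f)(0) = f′(0)`. -/
def nabla (f : ℝ → ℝ) : ℝ → ℝ :=
  fun s => if s = 0 then deriv f 0 else (f s - f 0) / s

/-- The particular solution `y_L(x;x₀,ε,a,λ,U) = D(x)·∫_x^{x₀} U(t)/(P_ε(t)D(t)) dt`. -/
def yL {E : Type*} (P : ℝ → ℝ → ℝ) (V : E → ℝ → ℝ) (x x₀ ε : ℝ) (a : E) (lam : ℝ)
    (U : SeriesU) : ℝ :=
  Dfun P V x ε a lam * ∫ t in x..x₀, U.eval t / (P t ε * Dfun P V t ε a lam)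


def BF {ι : Type*} (r : ℝ) : ℕ → (ι → ℝ → ℝ) → Prop
  | 0, f => (∃ C, ∀ i, ∀ s ∈ Ioo (-r) r, |f i s| ≤ C) ∧ ∀ i, ContinuousOn (f i) (Ioo (-r) r)
  | k + 1, f => (∃ C, ∀ i, ∀ s ∈ Ioo (-r) r, |f i s| ≤ C) ∧
      ∃ f' : ι → ℝ → ℝ, (∀ i, ∀ s ∈ Ioo (-r) r, HasDerivAt (f i) (f' i s) s) ∧ BF r k f'

section BFlemmas

variable {ι : Type*} {r : ℝ}

theorem BF.bdd {k : ℕ} {f : ι → ℝ → ℝ} (h : BF r k f) :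
    ∃ C, ∀ i, ∀ s ∈ Ioo (-r) r, |f i s| ≤ C := by
  cases k with
  | zero => exact h.1
  | succ k => exact h.1

theorem BF.cont {k : ℕ} {f : ι → ℝ → ℝ} (h : BF r k f) :
    ∀ i, ContinuousOn (f i) (Ioo (-r) r) := by
  cases k with
  | zero => exact h.2
  | succ k =>
    obtain ⟨_, f', hf, _⟩ := h
    exact fun i s hs => (hf i s hs).continuousAt.continuousWithinAt

theorem BF.down {k : ℕ} : ∀ {f : ι → ℝ → ℝ}, BF r (k + 1) f → BF r k f := by
  induction k with
  | zero => intro f h; exact ⟨h.bdd, h.cont⟩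
  | succ k ih =>
    intro f h
    obtain ⟨hb, f', hf, h'⟩ := h
    exact ⟨hb, f', hf, ih h'⟩

theorem BF.congr {k : ℕ} {f g : ι → ℝ → ℝ} (h : BF r k f)
    (hfg : ∀ i, ∀ s ∈ Ioo (-r) r, g i s = f i s) : BF r k g := by
  cases k with
  | zero =>
    obtain ⟨⟨C, hC⟩, hc⟩ := h
    exact ⟨⟨C, fun i s hs => by rw [hfg i s hs]; exact hC i s hs⟩,
      fun i => (hc i).congr (hfg i)⟩
  | succ k =>
    obtain ⟨⟨C, hC⟩, f', hf, h'⟩ := h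
    refine ⟨⟨C, fun i s hs => by rw [hfg i s hs]; exact hC i s hs⟩, f', fun i s hs => ?_, h'⟩
    refine (hf i s hs).congr_of_eventuallyEq ?_
    filter_upwards [isOpen_Ioo.mem_nhds hs] with t ht using hfg i t ht

theorem BF.add {k : ℕ} : ∀ {f g : ι → ℝ → ℝ}, BF r k f → BF r k g →
    BF r k (fun i s => f i s + g i s) := by
  induction k with
  | zero =>
    rintro f g ⟨⟨C, hC⟩, hc⟩ ⟨⟨D, hD⟩, hd⟩
    exact ⟨⟨C + D, fun i s hs => (abs_add_le _ _).trans (add_le_add (hC i s hs) (hD i s hs))⟩,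
      fun i => (hc i).add (hd i)⟩
  | succ k ih =>
    rintro f g ⟨⟨C, hC⟩, f', hf, hf'⟩ ⟨⟨D, hD⟩, g', hg, hg'⟩
    exact ⟨⟨C + D, fun i s hs => (abs_add_le _ _).trans (add_le_add (hC i s hs) (hD i s hs))⟩,
      _, fun i s hs => (hf i s hs).add (hg i s hs), ih hf' hg'⟩

theorem bdd_mul_aux {f g : ι → ℝ → ℝ} {C D : ℝ} (hC : ∀ i, ∀ s ∈ Ioo (-r) r, |f i s| ≤ C)
    (hD : ∀ i, ∀ s ∈ Ioo (-r) r, |g i s| ≤ D) :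
    ∀ i, ∀ s ∈ Ioo (-r) r, |f i s * g i s| ≤ C * D := by
  intro i s hs
  rw [abs_mul]
  have := hC i s hs
  have := hD i s hs
  exact mul_le_mul (hC i s hs) (hD i s hs) (abs_nonneg _) ((abs_nonneg _).trans (hC i s hs))

theorem BF.mul {k : ℕ} : ∀ {f g : ι → ℝ → ℝ}, BF r k f → BF r k g →
    BF r k (fun i s => f i s * g i s) := by
  induction k with
  | zero =>
    rintro f g ⟨⟨C, hC⟩, hc⟩ ⟨⟨D, hD⟩, hd⟩
    exact ⟨⟨C * D, bdd_mul_aux hC hD⟩, fun i => (hc i).mul (hd i)⟩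
  | succ k ih =>
    intro f g hF hG
    obtain ⟨⟨C, hC⟩, f', hf, hf'⟩ := id hF
    obtain ⟨⟨D, hD⟩, g', hg, hg'⟩ := id hG
    exact ⟨⟨C * D, bdd_mul_aux hC hD⟩,
      _, fun i s hs => (hf i s hs).mul (hg i s hs), (ih hf' hG.down).add (ih hF.down hg')⟩

theorem BF.const {k : ℕ} : ∀ {c : ι → ℝ}, (∃ C, ∀ i, |c i| ≤ C) →
    BF r k (fun i _ => c i) := by
  induction k with
  | zero =>
    rintro c ⟨C, hC⟩
    exact ⟨⟨C, fun i s _ => hC i⟩, fun i => continuousOn_const⟩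
  | succ k ih =>
    rintro c ⟨C, hC⟩
    exact ⟨⟨C, fun i s _ => hC i⟩, fun _ _ => 0, fun i s _ => hasDerivAt_const _ _,
      ih (c := fun _ => 0) ⟨0, by simp⟩⟩

theorem BF.inv {k : ℕ} {v : ℝ} (hv : 0 < v) : ∀ {f : ι → ℝ → ℝ}, BF r k f →
    (∀ i, ∀ s ∈ Ioo (-r) r, v ≤ f i s) → BF r k (fun i s => (f i s)⁻¹) := by
  have hb : ∀ {f : ι → ℝ → ℝ}, (∀ i, ∀ s ∈ Ioo (-r) r, v ≤ f i s) →
    ∀ i, ∀ s ∈ Ioo (-r) r, |(f i s)⁻¹| ≤ v⁻¹ := by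
    intro f h i s hs
    have := h i s hs
    rw [abs_of_pos (inv_pos.2 (hv.trans_le this))]
    exact inv_anti₀ hv this
  induction k with
  | zero =>
    rintro f ⟨_, hc⟩ h
    exact ⟨⟨v⁻¹, hb h⟩, fun i => (hc i).inv₀ fun s hs => (hv.trans_le (h i s hs)).ne'⟩
  | succ k ih =>
    intro f hF h
    obtain ⟨_, f', hf, hf'⟩ := id hF
    have hi := ih hF.down h
    refine ⟨⟨v⁻¹, hb h⟩, _, fun i s hs => (hf i s hs).inv (hv.trans_le (h i s hs)).ne', ?_⟩
    refine (((BF.const (c := fun _ => (-1 : ℝ)) ⟨1, by simp⟩).mul hf').mul (hi.mul hi)).congr ?_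
    intro i s hs
    have := (hv.trans_le (h i s hs)).ne'
    field_simp

def Jop (m : ℕ) (g : ℝ → ℝ) (x : ℝ) : ℝ := ∫ t in (0 : ℝ)..1, t ^ m * g (t * x)

theorem mul_mem_aux {t x : ℝ} (ht : t ∈ Icc (0 : ℝ) 1) (hx : x ∈ Ioo (-r) r) :
    t * x ∈ Ioo (-r) r := by
  have hx' : |x| < r := abs_lt.2 hx
  refine abs_lt.1 ?_
  rw [abs_mul, abs_of_nonneg ht.1]
  nlinarith [ht.1, ht.2, abs_nonneg x]

theorem J_cont_aux {m : ℕ} {g : ℝ → ℝ} (hg : ContinuousOn g (Ioo (-r) r)) {x : ℝ}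
    (hx : x ∈ Ioo (-r) r) :
    IntervalIntegrable (fun t => t ^ m * g (t * x)) MeasureTheory.volume 0 1 := by
  apply ContinuousOn.intervalIntegrable
  rw [uIcc_of_le zero_le_one]
  refine (continuous_pow m).continuousOn.mul (hg.comp (by fun_prop) ?_)
  intro t ht
  exact mul_mem_aux ht hx

theorem J_bd_aux {m : ℕ} {g : ℝ → ℝ} {C : ℝ} (hg : ∀ s ∈ Ioo (-r) r, |g s| ≤ C) {x t : ℝ}
    (hx : x ∈ Ioo (-r) r) (ht : t ∈ uIoc (0 : ℝ) 1) : ‖t ^ m * g (t * x)‖ ≤ C := by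
  rw [uIoc_of_le zero_le_one] at ht
  have h1 := hg _ (mul_mem_aux ⟨ht.1.le, ht.2⟩ hx)
  rw [norm_mul, Real.norm_eq_abs, Real.norm_eq_abs, abs_of_nonneg (pow_nonneg ht.1.le m)]
  have : t ^ m ≤ 1 := pow_le_one₀ ht.1.le ht.2
  nlinarith [abs_nonneg (g (t * x)), pow_nonneg ht.1.le m]

theorem BF.J {k : ℕ} : ∀ {m : ℕ} {g : ι → ℝ → ℝ}, BF r k g →
    BF r k (fun i s => Jop m (g i) s) := by
  have hb : ∀ {m : ℕ} {g : ι → ℝ → ℝ}, (∃ C, ∀ i, ∀ s ∈ Ioo (-r) r, |g i s| ≤ C) →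
      ∃ C, ∀ i, ∀ s ∈ Ioo (-r) r, |Jop m (g i) s| ≤ C := by
    rintro m g ⟨C, hC⟩
    refine ⟨C, fun i s hs => ?_⟩
    have := intervalIntegral.norm_integral_le_of_norm_le_const (a := 0) (b := 1) (C := C)
      (f := fun t => t ^ m * g i (t * s)) (fun t ht => J_bd_aux (hC i) hs ht)
    simpa [Jop] using this
  induction k with
  | zero =>
    intro m g hg
    refine ⟨hb hg.1, fun i s hs => ContinuousAt.continuousWithinAt ?_⟩
    obtain ⟨⟨C, hC⟩, hc⟩ := hg
    have hn := isOpen_Ioo.mem_nhds hs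
    refine intervalIntegral.continuousAt_of_dominated_interval (bound := fun _ => C) ?_ ?_
      intervalIntegrable_const ?_
    · filter_upwards [hn] with x hx
      exact (J_cont_aux (hc i) hx).def'.aestronglyMeasurable
    · filter_upwards [hn] with x hx
      exact Eventually.of_forall fun t ht => J_bd_aux (hC i) hx ht
    · refine Eventually.of_forall fun t ht => ?_
      rw [uIoc_of_le zero_le_one] at ht
      have h1 := (hc i).continuousAt (isOpen_Ioo.mem_nhds (mul_mem_aux ⟨ht.1.le, ht.2⟩ hs))
      exact continuousAt_const.mul (ContinuousAt.comp (f := fun x => t * x) h1 (by fun_prop))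
  | succ k ih =>
    intro m g hG
    obtain ⟨hbd, g', hg, hg'⟩ := id hG
    refine ⟨hb hbd, _, fun i s hs => ?_, ih (m := m + 1) hg'⟩
    obtain ⟨C, hC⟩ := hg'.bdd
    have hn := isOpen_Ioo.mem_nhds hs
    refine (intervalIntegral.hasDerivAt_integral_of_dominated_loc_of_deriv_le
      (F := fun x t => t ^ m * g i (t * x)) (F' := fun x t => t ^ (m + 1) * g' i (t * x))
      (bound := fun _ => C) hn ?_ (J_cont_aux (hG.cont i) hs) ?_ ?_
      intervalIntegrable_const ?_).2
    · filter_upwards [hn] with x hx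
      exact (J_cont_aux (hG.cont i) hx).def'.aestronglyMeasurable
    · exact (J_cont_aux (hg'.cont i) hs).def'.aestronglyMeasurable
    · exact Eventually.of_forall fun t ht x hx => J_bd_aux (hC i) hx ht
    · refine Eventually.of_forall fun t ht x hx => ?_
      rw [uIoc_of_le zero_le_one] at ht
      have h1 := hg i _ (mul_mem_aux ⟨ht.1.le, ht.2⟩ hx)
      have h2 : HasDerivAt (fun x => t * x) t x := by simpa using (hasDerivAt_id x).const_mul t
      have h3 := (h1.comp x h2).const_mul (t ^ m)
      refine h3.congr_deriv ?_
      ring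

theorem BF.nabla {k : ℕ} (hr : 0 < r) {f : ι → ℝ → ℝ} (h : BF r (k + 1) f) :
    BF r k (fun i s => nabla (f i) s) := by
  obtain ⟨_, f', hf, hf'⟩ := id h
  refine (hf'.J (m := 0)).congr ?_
  intro i s hs
  have h0 : (0 : ℝ) ∈ Ioo (-r) r := ⟨by linarith, hr⟩
  by_cases hs0 : s = 0
  · subst hs0
    simp [_root_.nabla, Jop, (hf i 0 h0).deriv]
  · have := intervalIntegral.integral_eq_sub_of_hasDerivAt (a := 0) (b := 1)
      (f := fun t => f i (t * s)) (f' := fun t => f' i (t * s) * s) (fun t ht => by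
        rw [uIcc_of_le zero_le_one] at ht
        have h2 : HasDerivAt (fun t => t * s) s t := by
          simpa using (hasDerivAt_id t).mul_const s
        exact (hf i _ (mul_mem_aux ht hs)).comp t h2)
      (by simpa using (J_cont_aux (m := 0) (hf'.cont i) hs).mul_const s)
    simp only [_root_.nabla, hs0, if_false, Jop, pow_zero, one_mul]
    rw [intervalIntegral.integral_mul_const] at this
    simp only [one_mul, zero_mul] at this
    rw [← this, mul_div_cancel_right₀ _ hs0]

theorem BF.analytic {X : Type*} [NormedAddCommGroup X] [NormedSpace ℝ X] {K : Set (X × ℝ)}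
    (hK : IsCompact K) (x : ι → X) (c : ι → ℝ)
    (hmem : ∀ i, ∀ s ∈ Ioo (-r) r, (x i, s + c i) ∈ K) (k : ℕ) :
    ∀ G : X × ℝ → ℝ, (∀ z ∈ K, AnalyticAt ℝ G z) → BF r k (fun i s => G (x i, s + c i)) := by
  have hb : ∀ G : X × ℝ → ℝ, (∀ z ∈ K, AnalyticAt ℝ G z) →
      ∃ C, ∀ i, ∀ s ∈ Ioo (-r) r, |G (x i, s + c i)| ≤ C := by
    intro G hG
    obtain ⟨C, hC⟩ := hK.exists_bound_of_continuousOn (f := G)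
      (fun z hz => (hG z hz).continuousAt.continuousWithinAt)
    exact ⟨C, fun i s hs => hC _ (hmem i s hs)⟩
  have hd : ∀ G : X × ℝ → ℝ, (∀ z ∈ K, AnalyticAt ℝ G z) → ∀ i, ∀ s ∈ Ioo (-r) r,
      HasDerivAt (fun s => G (x i, s + c i)) (fderiv ℝ G (x i, s + c i) (0, 1)) s := by
    intro G hG i s hs
    have h1 := (hG _ (hmem i s hs)).differentiableAt.hasFDerivAt
    have h2 : HasDerivAt (fun s : ℝ => (x i, s + c i)) ((0 : X), (1 : ℝ)) s :=
      (hasDerivAt_const s (x i)).prodMk ((hasDerivAt_id s).add_const (c i))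
    exact h1.comp_hasDerivAt s h2
  induction k with
  | zero =>
    intro G hG
    exact ⟨hb G hG, fun i s hs => (hd G hG i s hs).continuousAt.continuousWithinAt⟩
  | succ k ih =>
    intro G hG
    refine ⟨hb G hG, _, hd G hG, ih (fun z => fderiv ℝ G z (0, 1)) fun z hz => ?_⟩
    exact ((ContinuousLinearMap.apply ℝ ℝ ((0 : X), (1 : ℝ))).analyticAt _).comp (hG z hz).fderiv

theorem summ_aux (m : ℕ) : Summable fun n : ℕ => ((n : ℝ) + 1) ^ m * (1 / 2) ^ n := by
  have h := summable_pow_mul_geometric_of_norm_lt_one (R := ℝ) m (r := 1 / 2) (by norm_num)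
  have h2 := ((summable_nat_add_iff 1).2 h).mul_left 2
  refine h2.congr fun n => ?_
  push_cast
  ring

theorem BF.series (c : ι → ℝ) (hc : ∀ i, |c i| + r ≤ 1 / 2) (k : ℕ) :
    ∀ (m : ℕ) (C : ℝ) (a : ι → ℕ → ℝ), (∀ i j, |a i j| ≤ C * ((j : ℝ) + 1) ^ m) →
      BF r k (fun i s => ∑' j, a i j * (s + c i) ^ j) := by
  have hx : ∀ i, ∀ s ∈ Ioo (-r) r, s + c i ∈ Ioo (-(1 / 2) : ℝ) (1 / 2) := by
    intro i s hs
    have := hc i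
    have h1 := abs_le.1 (le_refl |c i|)
    constructor <;> linarith [hs.1, hs.2, h1.1, h1.2]
  have ht : ∀ (m : ℕ) (C : ℝ) (a : ι → ℕ → ℝ), (∀ i j, |a i j| ≤ C * ((j : ℝ) + 1) ^ m) →
      ∀ i, ∀ y ∈ Ioo (-(1 / 2) : ℝ) (1 / 2), ∀ j,
        ‖a i j * y ^ j‖ ≤ C * (((j : ℝ) + 1) ^ m * (1 / 2) ^ j) := by
    intro m C a ha i y hy j
    rw [norm_mul, norm_pow, Real.norm_eq_abs, Real.norm_eq_abs, ← mul_assoc]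
    exact mul_le_mul (ha i j) (pow_le_pow_left₀ (abs_nonneg _) (abs_lt.2 hy).le j)
      (by positivity) ((abs_nonneg _).trans (ha i j))
  have hb : ∀ (m : ℕ) (C : ℝ) (a : ι → ℕ → ℝ), (∀ i j, |a i j| ≤ C * ((j : ℝ) + 1) ^ m) →
      ∃ D, ∀ i, ∀ s ∈ Ioo (-r) r, |∑' j, a i j * (s + c i) ^ j| ≤ D := by
    intro m C a ha
    exact ⟨_, fun i s hs => tsum_of_norm_bounded ((summ_aux m).mul_left C).hasSum
      (ht m C a ha i _ (hx i s hs))⟩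
  have ha' : ∀ (m : ℕ) (C : ℝ) (a : ι → ℕ → ℝ), (∀ i j, |a i j| ≤ C * ((j : ℝ) + 1) ^ m) →
      ∀ i (j : ℕ), |((j : ℝ) + 1) * a i (j + 1)| ≤ (C * 2 ^ m) * ((j : ℝ) + 1) ^ (m + 1) := by
    intro m C a ha i j
    have h1 := ha i (j + 1)
    have hC : 0 ≤ C := by have := (abs_nonneg _).trans (ha i 0); simpa using this
    have hj : (0 : ℝ) ≤ j := Nat.cast_nonneg j
    rw [abs_mul, abs_of_nonneg (by positivity)]
    have h2 : ((j : ℝ) + 1 + 1) ^ m ≤ (2 * ((j : ℝ) + 1)) ^ m :=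
      pow_le_pow_left₀ (by positivity) (by linarith) m
    rw [mul_pow] at h2
    push_cast at h1
    calc ((j : ℝ) + 1) * |a i (j + 1)| ≤ ((j : ℝ) + 1) * (C * (2 ^ m * ((j : ℝ) + 1) ^ m)) := by
          gcongr; exact h1.trans (by gcongr)
      _ = _ := by ring
  have hd : ∀ (m : ℕ) (C : ℝ) (a : ι → ℕ → ℝ), (∀ i j, |a i j| ≤ C * ((j : ℝ) + 1) ^ m) →
      ∀ i, ∀ s ∈ Ioo (-r) r, HasDerivAt (fun s => ∑' j, a i j * (s + c i) ^ j)
        (∑' j : ℕ, (((j : ℝ) + 1) * a i (j + 1)) * (s + c i) ^ j) s := by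
    intro m C a ha i s hs
    have hu : Summable fun n : ℕ => ‖(fun n : ℕ => 2 * ((C * 2 ^ m) * (((n : ℝ) + 1) ^ (m + 1) * (1 / 2) ^ n))) n‖ :=
      (((summ_aux (m + 1)).mul_left (C * 2 ^ m)).mul_left 2).norm
    have hC : 0 ≤ C := by have := (abs_nonneg _).trans (ha i 0); simpa using this
    have key := ht (m + 1) (C * 2 ^ m) _ (ha' m C a ha) i
    have hbd : ∀ n : ℕ, ∀ y ∈ Ioo (-(1 / 2) : ℝ) (1 / 2),
        ‖a i n * ((n : ℝ) * y ^ (n - 1))‖ ≤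
          2 * ((C * 2 ^ m) * (((n : ℝ) + 1) ^ (m + 1) * (1 / 2) ^ n)) := by
      intro n y hy
      cases n with
      | zero => simp; positivity
      | succ n =>
        have := key y hy n
        rw [show a i (n + 1) * (((n + 1 : ℕ) : ℝ) * y ^ (n + 1 - 1)) =
          ((n : ℝ) + 1) * a i (n + 1) * y ^ n by push_cast; ring]
        refine this.trans ?_
        have h3 : ((n : ℝ) + 1) ^ (m + 1) ≤ (((n + 1 : ℕ) : ℝ) + 1) ^ (m + 1) :=
          pow_le_pow_left₀ (by positivity) (by push_cast; linarith) _
        calc _ ≤ C * 2 ^ m * ((((n + 1 : ℕ) : ℝ) + 1) ^ (m + 1) * (1 / 2) ^ n) := by gcongr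
          _ = _ := by ring
    have h1 := hasDerivAt_tsum_of_isPreconnected (g := fun n y => a i n * y ^ n)
      (g' := fun n y => a i n * ((n : ℝ) * y ^ (n - 1))) (t := Ioo (-(1 / 2) : ℝ) (1 / 2))
      (y₀ := 0) (y := s + c i) hu.of_norm isOpen_Ioo isPreconnected_Ioo
      (fun n y _ => (hasDerivAt_pow n y).const_mul _) hbd (by norm_num)
      (by
        refine summable_of_ne_finset_zero (s := {0}) fun n hn => ?_
        simp at hn; simp [hn])
      (hx i s hs)
    have h2 : (∑' n : ℕ, a i n * ((n : ℝ) * (s + c i) ^ (n - 1))) =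
        ∑' j : ℕ, (((j : ℝ) + 1) * a i (j + 1)) * (s + c i) ^ j := by
      have hsum : Summable fun n : ℕ => a i n * ((n : ℝ) * (s + c i) ^ (n - 1)) :=
        Summable.of_norm_bounded hu.of_norm (fun n => hbd n _ (hx i s hs))
      rw [hsum.tsum_eq_zero_add]
      simp only [Nat.cast_zero, zero_mul, mul_zero, zero_add]
      refine tsum_congr fun n => ?_
      push_cast; ring
    rw [h2] at h1
    exact h1.comp_add_const s (c i)
  induction k with
  | zero =>
    intro m C a ha
    exact ⟨hb m C a ha, fun i s hs => (hd m C a ha i s hs).continuousAt.continuousWithinAt⟩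
  | succ k ih =>
    intro m C a ha
    exact ⟨hb m C a ha, _, hd m C a ha, ih (m + 1) (C * 2 ^ m) _ (ha' m C a ha)⟩

end BFlemmas

theorem max_aux {z d : ℝ → ℝ} {x β M : ℝ} (hx : x ≤ β) (hc : ContinuousOn z (Icc x β))
    (hd : ∀ t ∈ Ico x β, HasDerivAt z (d t) t) (hp : ∀ t ∈ Ico x β, M < z t → 0 < d t)
    (hβ : z β ≤ M) : z x ≤ M := by
  by_contra! hlt
  obtain ⟨y, hy, hmax⟩ := isCompact_Icc.exists_isMaxOn ⟨x, left_mem_Icc.2 hx⟩ hc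
  have hyM : M < z y := hlt.trans_le (hmax (left_mem_Icc.2 hx))
  have hyb : y < β := lt_of_le_of_ne hy.2 (by rintro rfl; linarith)
  have hdy := hd y ⟨hy.1, hyb⟩
  have hpos := hp y ⟨hy.1, hyb⟩ hyM
  have h1 : ∀ᶠ t in 𝓝[>] y, 0 < slope z y t := by
    have := (hasDerivAt_iff_tendsto_slope.1 hdy).eventually (lt_mem_nhds hpos)
    exact this.filter_mono (nhdsWithin_mono _ fun t (ht : y < t) => ht.ne')
  have h2 : ∀ᶠ t in 𝓝[>] y, t ∈ Ioo y β := Ioo_mem_nhdsGT hyb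
  obtain ⟨t, ht1, ht2⟩ := (h1.and h2).exists
  have h3 : z t ≤ z y := hmax ⟨hy.1.trans ht2.1.le, ht2.2.le⟩
  rw [slope_def_field] at ht1
  have : 0 < t - y := by linarith [ht2.1]
  have := (div_pos_iff_of_pos_right this).1 ht1
  linarith

theorem max_abs_aux {z p v f : ℝ → ℝ} {x β M lam : ℝ} (hx : x ≤ β) (hlam : 0 < lam)
    (hc : ContinuousOn z (Icc x β))
    (hd : ∀ t ∈ Ico x β, HasDerivAt z (lam * (v t * z t - f t) / p t) t)
    (hp : ∀ t ∈ Ico x β, 0 < p t) (hv : ∀ t ∈ Ico x β, 0 < v t)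
    (hf : ∀ t ∈ Ico x β, |f t| ≤ M * v t) (hβ : |z β| ≤ M) : |z x| ≤ M := by
  rw [abs_le]
  constructor
  · have := max_aux (z := fun t => -z t) (M := M) hx hc.neg (fun t ht => (hd t ht).neg) ?_
      (by linarith [(abs_le.1 hβ).1])
    · linarith
    intro t ht h
    have h1 := hp t ht
    have h2 := hv t ht
    have h3 := (abs_le.1 (hf t ht)).1
    rw [← neg_div]
    apply div_pos _ h1
    have : v t * z t - f t < 0 := by nlinarith
    nlinarith
  · refine max_aux hx hc hd ?_ (abs_le.1 hβ).2
    intro t ht h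
    have h1 := hp t ht
    have h2 := hv t ht
    have h3 := (abs_le.1 (hf t ht)).2
    apply div_pos _ h1
    have : 0 < v t * z t - f t := by nlinarith
    nlinarith

def zf (T : ℝ → ℝ) (c : ℕ → ℝ) (l : ℕ) (s : ℝ) : ℝ :=
  (T s - ∑ j ∈ Finset.range l, c j * s ^ j) / s ^ l

theorem zf_succ (T : ℝ → ℝ) (c : ℕ → ℝ) (l : ℕ) {s : ℝ} (hs : s ≠ 0) :
    zf T c (l + 1) s = (zf T c l s - c l) / s := by
  simp only [zf, Finset.sum_range_succ]
  field_simp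
  ring

theorem zf_ode {T v Q : ℝ → ℝ} {F : ℕ → ℝ → ℝ} {c : ℕ → ℝ} {lam b : ℝ} (hlam : 0 < lam) (N : ℕ)
    (hT : ∀ s ∈ Ioo 0 b, HasDerivAt T (lam * (v s * T s - F 0 s) / (s * Q s)) s)
    (hQ : ∀ s ∈ Ioo 0 b, 0 < s * Q s)
    (hF : ∀ l < N, ∀ s ∈ Ioo 0 b, s * F (l + 1) s = F l s - c l * (v s - l / lam * Q s)) :
    ∀ l ≤ N, ∀ s ∈ Ioo 0 b, HasDerivAt (zf T c l)
      (lam * ((v s - l / lam * Q s) * zf T c l s - F l s) / (s * Q s)) s := by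
  intro l
  induction l with
  | zero =>
    intro _ s hs
    have : zf T c 0 = T := by funext x; simp [zf]
    rw [this]
    simpa using hT s hs
  | succ l ih =>
    intro hl s hs
    have h1 := ih (by omega) s hs
    have hs0 : s ≠ 0 := hs.1.ne'
    have hQ0 : Q s ≠ 0 := by
      intro h; have := hQ s hs; rw [h] at this; simp at this
    have h2 := ((h1.sub_const (c l)).div (hasDerivAt_id s) hs0).congr_of_eventuallyEq
      (f₁ := zf T c (l + 1)) (by
        filter_upwards [isOpen_Ioo.mem_nhds hs] with t ht
        simpa using zf_succ T c l ht.1.ne')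
    refine h2.congr_deriv ?_
    have h3 := hF l (by omega) s hs
    have h4 : F (l + 1) s = (F l s - c l * (v s - l / lam * Q s)) / s := by
      rw [← h3]; field_simp
    rw [zf_succ T c l hs0, h4]
    generalize zf T c l s = z
    simp only [id]
    push_cast
    field_simp
    ring

theorem SeriesU.summ (U : SeriesU) : Summable fun j => |U.u j| := by
  obtain ⟨r, hr, h⟩ := U.radius_gt_one
  refine Summable.of_nonneg_of_le (fun j => abs_nonneg _) (fun j => ?_) h
  exact le_mul_of_one_le_right (abs_nonneg _) (one_le_pow₀ hr.le)

theorem SeriesU.coef_le {U : SeriesU} (h : U.norm ≤ 1) (j : ℕ) : |U.u j| ≤ 1 :=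
  (U.summ.le_tsum j (fun _ _ => abs_nonneg _)).trans h

theorem SeriesU.term_le (U : SeriesU) (j : ℕ) {x : ℝ} (hx : x ∈ Icc (-1 : ℝ) 1) :
    ‖U.u j * x ^ j‖ ≤ |U.u j| := by
  rw [norm_mul, norm_pow, Real.norm_eq_abs, Real.norm_eq_abs]
  exact mul_le_of_le_one_right (abs_nonneg _) (pow_le_one₀ (abs_nonneg _) (abs_le.2 hx))

theorem SeriesU.eval_le {U : SeriesU} (h : U.norm ≤ 1) {x : ℝ} (hx : x ∈ Icc (-1 : ℝ) 1) :
    |U.eval x| ≤ 1 :=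
  (tsum_of_norm_bounded U.summ.hasSum (fun j => U.term_le j hx)).trans h

theorem SeriesU.eval_cont (U : SeriesU) : ContinuousOn U.eval (Icc (-1 : ℝ) 1) :=
  continuousOn_tsum (fun j => by fun_prop) U.summ (fun j _ hx => U.term_le j hx)

theorem yL_aux {E : Type*} (P : ℝ → ℝ → ℝ) (V : E → ℝ → ℝ) (θ x₀ ε : ℝ) (a : E) (lam M : ℝ)
    (U : SeriesU) (hlam : 0 < lam) (hx₀ : x₀ ≤ 1)
    (hPc : ContinuousOn (fun t => P t ε) (Ioc θ 1)) (hVc : ContinuousOn (V a) (Ioc θ 1))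
    (hUc : ContinuousOn U.eval (Ioc θ 1)) (hP : ∀ t ∈ Ioc θ 1, 0 < P t ε)
    (hV : ∀ t ∈ Ioc θ 1, 0 < V a t) (hM : 0 ≤ M)
    (hU : ∀ t ∈ Ioc θ 1, |1 / lam * U.eval t| ≤ M * V a t) :
    ∀ x ∈ Ioo θ x₀, HasDerivAt (fun x => yL P V x x₀ ε a lam U)
      (lam * (V a x * yL P V x x₀ ε a lam U - 1 / lam * U.eval x) / P x ε) x ∧
      |yL P V x x₀ ε a lam U| ≤ M := by
  have hgc : ContinuousOn (fun t => V a t / P t ε) (Ioc θ 1) :=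
    hVc.div hPc fun t ht => (hP t ht).ne'
  have hint : ∀ x ∈ Ioc θ 1, IntervalIntegrable (fun t => V a t / P t ε) MeasureTheory.volume 1 x := by
    intro x hx
    apply ContinuousOn.intervalIntegrable
    rw [uIcc_of_ge hx.2]
    exact hgc.mono fun t ht => ⟨hx.1.trans_le ht.1, ht.2⟩
  have hDd : ∀ x ∈ Ioo θ 1, HasDerivAt (fun x => Dfun P V x ε a lam)
      (Dfun P V x ε a lam * (lam * (V a x / P x ε))) x := by
    intro x hx
    have hgo := hgc.mono (Ioo_subset_Ioc_self)
    have h1 := intervalIntegral.integral_hasDerivAt_right (hint x ⟨hx.1, hx.2.le⟩)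
      (hgo.stronglyMeasurableAtFilter isOpen_Ioo x hx)
      (hgo.continuousAt (isOpen_Ioo.mem_nhds hx))
    exact (h1.const_mul lam).exp
  have hDc : ContinuousOn (fun x => Dfun P V x ε a lam) (Ioc θ 1) := by
    intro x hx
    obtain ⟨y, hy1, hy2⟩ := exists_between hx.1
    have h1 := intervalIntegral.continuousOn_primitive_interval' (a := 1)
      (hint y ⟨hy1, hy2.le.trans hx.2⟩) (by simp)
    rw [uIcc_of_ge (hy2.le.trans hx.2)] at h1
    have h2 : ContinuousWithinAt (fun x => Dfun P V x ε a lam) (Icc y 1) x :=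
      (((h1 x ⟨hy2.le, hx.2⟩).const_smul lam)).rexp
    refine h2.mono_of_mem_nhdsWithin ?_
    filter_upwards [self_mem_nhdsWithin, mem_nhdsWithin_of_mem_nhds (Ioi_mem_nhds hy2)] with t ht ht'
    exact ⟨le_of_lt ht', ht.2⟩
  have hDpos : ∀ x, 0 < Dfun P V x ε a lam := fun x => Real.exp_pos _
  have hkc : ContinuousOn (fun t => U.eval t / (P t ε * Dfun P V t ε a lam)) (Ioc θ 1) :=
    hUc.div (hPc.mul hDc) fun t ht => (mul_pos (hP t ht) (hDpos t)).ne'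
  have hint2 : ∀ x ∈ Ioo θ x₀, IntervalIntegrable
      (fun t => U.eval t / (P t ε * Dfun P V t ε a lam)) MeasureTheory.volume x x₀ := by
    intro x hx
    apply ContinuousOn.intervalIntegrable
    rw [uIcc_of_le hx.2.le]
    exact hkc.mono fun t ht => ⟨hx.1.trans_le ht.1, ht.2.trans hx₀⟩
  have hder : ∀ x ∈ Ioo θ x₀, HasDerivAt (fun x => yL P V x x₀ ε a lam U)
      (lam * (V a x * yL P V x x₀ ε a lam U - 1 / lam * U.eval x) / P x ε) x := by
    intro x hx
    have hx1 : x ∈ Ioo θ 1 := ⟨hx.1, hx.2.trans_le hx₀⟩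
    have hgo := hkc.mono (Ioo_subset_Ioc_self)
    have h1 := intervalIntegral.integral_hasDerivAt_left (hint2 x hx)
      (hgo.stronglyMeasurableAtFilter isOpen_Ioo x hx1)
      (hgo.continuousAt (isOpen_Ioo.mem_nhds hx1))
    refine ((hDd x hx1).mul h1).congr_deriv ?_
    simp only [yL]
    have h2 := (hDpos x).ne'
    have h3 := (hP x ⟨hx1.1, hx1.2.le⟩).ne'
    generalize (∫ t in x..x₀, U.eval t / (P t ε * Dfun P V t ε a lam)) = I
    field_simp
    ring
  intro x hx
  refine ⟨hder x hx, ?_⟩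
  refine max_abs_aux (z := fun x => yL P V x x₀ ε a lam U) (p := fun t => P t ε) (v := V a)
    (f := fun t => 1 / lam * U.eval t) hx.2.le hlam ?_
    (fun t ht => hder t ⟨hx.1.trans_le ht.1, ht.2⟩)
    (fun t ht => hP t ⟨hx.1.trans_le ht.1, ht.2.le.trans hx₀⟩)
    (fun t ht => hV t ⟨hx.1.trans_le ht.1, ht.2.le.trans hx₀⟩)
    (fun t ht => hU t ⟨hx.1.trans_le ht.1, ht.2.le.trans hx₀⟩) (by simpa [yL] using hM)
  have hsub : Icc x x₀ ⊆ Ioc θ 1 := fun t ht => ⟨hx.1.trans_le ht.1, ht.2.trans hx₀⟩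
  have h1 := intervalIntegral.continuousOn_primitive_interval' (a := x₀)
      (hint2 x hx) (by simp)
  rw [uIcc_of_le hx.2.le] at h1
  refine ((hDc.mono hsub).mul h1.neg).congr fun t ht => ?_
  simp only [yL]
  rw [intervalIntegral.integral_symm]
  rfl

/-- **Lemma 2.7 of the paper (basis of the induction for Theorem A(1)).**  Under (H1) and
(H2), with the coefficients `c_ℓ` given by the recursive construction of Definition 2.1
(`F₀ = 𝒰`, `𝒱_ℓ = 𝒱 − (ℓ/λ)𝒬`, `F_{ℓ+1} = 𝒱_ℓ∇(F_ℓ/𝒱_ℓ)`, `c_ℓ = (F_ℓ/𝒱_ℓ)(0)`), for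
each `ℓ ∈ ℤ⁺`, `λ₀ > 0` and compact sets `K_x ⊆ (0,1]`, `K_a ⊆ A`, there exists `ε₀ > 0`
such that `h_ℓ(s) = (𝒯(s) − Σ_ℓ(s))/s^ℓ`, where `𝒯(s) = y_L(s+ϑ_ε;x₀,ε,a,λ,U)`, tends to
zero as `s → 0⁺`, uniformly on `K_x × [0,ε₀] × K_a × [λ₀,∞) × 𝒰₁`. -/
theorem basis_of_induction {E : Type*} [NormedAddCommGroup E] [NormedSpace ℝ E]
    (μ ρ ν : ℕ) (hμ : 0 < μ) (hρ : 0 < ρ) (hν : 0 < ν)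
    (A : Set E) (hA : IsOpen A)
    (P : ℝ → ℝ → ℝ) (p : ℕ → ℝ → ℝ)
    (hpa : ∀ i, AnalyticAt ℝ (p i) 0)
    (hPpoly : ∀ x ε : ℝ, P x ε = ∑ i ∈ Finset.range (μ + 2), p i ε * x ^ i)
    (hP0 : ∀ x : ℝ, P x 0 = x ^ (μ + 1))
    (σ : ℝ → ℝ) (hσa : AnalyticAt ℝ σ 0) (hσ0 : σ 0 = 0)
    (hroot : ∀ᶠ ε in 𝓝[≥] (0 : ℝ),
      P (σ (ε ^ (1 / (ρ : ℝ)))) ε = 0 ∧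
      ∀ x ∈ Icc (-1 : ℝ) 1, σ (ε ^ (1 / (ρ : ℝ))) < x → P x ε ≠ 0)
    (Q : ℝ → ℝ → ℝ)
    (hQdef : ∀ s e : ℝ, s * Q s e = P (s + σ e) (e ^ ρ))
    (hQa : AnalyticAt ℝ (fun z : ℝ × ℝ => Q z.1 z.2) (0, 0))
    (hQ0 : ∀ s : ℝ, Q s 0 = s ^ μ)
    (q : ℕ → ℕ → ℝ)
    (hqsum : ∀ᶠ z : ℝ × ℝ in 𝓝 (0, 0),
      HasSum (fun ij : ℕ × ℕ => q ij.1 ij.2 * z.1 ^ ij.1 * z.2 ^ ij.2) (Q z.1 z.2))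
    (hχ : 0 < q 0 ν) (hνmin : ∀ j < ν, q 0 j = 0)
    (hH1 : ∀ (i j : ℕ), q i j ≠ 0 → 1 ≤ (i : ℝ) / μ + (j : ℝ) / ν)
    (hH2 : ∀ θ ∈ Icc (0 : ℝ) (π / 2),
      0 < ∑ i ∈ Finset.range (μ + 1), ∑ j ∈ Finset.range (ν + 1),
        (if (i : ℝ) / μ + (j : ℝ) / ν = 1 then q i j * sin θ ^ i * cos θ ^ j else 0))
    (V : E → ℝ → ℝ)
    (hVa : ∀ a ∈ A, ∀ x ∈ Icc (-1 : ℝ) 1,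
      AnalyticAt ℝ (fun z : E × ℝ => V z.1 z.2) (a, x))
    (hV0 : ∀ a ∈ A, V a 0 = 1)
    (hVpos : ∀ a ∈ A, ∀ x ∈ Icc (-1 : ℝ) 1, 0 < V a x)
    -- the recursively defined functions `F_ℓ` and coefficients `c_ℓ` of Definition 2.1
    (F : ℕ → ℝ → ℝ → E → ℝ → SeriesU → ℝ) (c : ℕ → ℝ → E → ℝ → SeriesU → ℝ)
    (hF0 : ∀ (s e : ℝ) (a : E) (lam : ℝ) (U : SeriesU),
      F 0 s e a lam U = (1 / lam) * U.eval (s + σ e))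
    (hFs : ∀ (l : ℕ) (s e : ℝ) (a : E) (lam : ℝ) (U : SeriesU),
      F (l + 1) s e a lam U =
        (V a (s + σ e) - (l / lam) * Q s e) *
          nabla (fun t => F l t e a lam U / (V a (t + σ e) - (l / lam) * Q t e)) s)
    (hcdef : ∀ (l : ℕ) (e : ℝ) (a : E) (lam : ℝ) (U : SeriesU),
      c l e a lam U = F l 0 e a lam U / (V a (σ e) - (l / lam) * Q 0 e)) :
    ∀ ℓ : ℕ, ∀ lam₀ : ℝ, 0 < lam₀ →
      ∀ Kx : Set ℝ, IsCompact Kx → Kx ⊆ Ioc 0 1 →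
      ∀ Ka : Set E, IsCompact Ka → Ka ⊆ A →
        ∃ ε₀ > (0 : ℝ), ∀ δ > (0 : ℝ), ∀ᶠ s in 𝓝[>] (0 : ℝ),
          ∀ x₀ ∈ Kx, ∀ ε ∈ Icc (0 : ℝ) ε₀, ∀ a ∈ Ka, ∀ lam : ℝ, lam₀ ≤ lam →
            ∀ U : SeriesU, U.norm ≤ 1 →
              |(yL P V (s + σ (ε ^ (1 / (ρ : ℝ)))) x₀ ε a lam U -
                  ∑ j ∈ Finset.range (ℓ + 1),
                    c j (ε ^ (1 / (ρ : ℝ))) a lam U * s ^ j) / s ^ ℓ| < δ := by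
  intro ℓ lam₀ hlam₀ Kx hKx hKx1 Ka hKa hKaA
  -- uniform lower bound of V
  have hKc : IsCompact (Ka ×ˢ Icc (-1 : ℝ) 1) := hKa.prod isCompact_Icc
  obtain ⟨v, hv, hVv⟩ := hKc.exists_forall_le' (f := fun z : E × ℝ => V z.1 z.2)
    (fun z hz => (hVa z.1 (hKaA hz.1) z.2 hz.2).continuousAt.continuousWithinAt) (a := 0)
    (fun z hz => hVpos z.1 (hKaA hz.1) z.2 hz.2)
  -- lower bound of Kx
  obtain ⟨m, hm, hKm⟩ := hKx.exists_forall_le' (f := fun x : ℝ => x) continuousOn_id (a := 0)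
    (fun x hx => (hKx1 hx).1)
  -- neighbourhood for Q
  set κ : ℝ := (v / 2) * lam₀ / (ℓ + 1) with hκ
  have hκ0 : 0 < κ := by positivity
  have hQs : ∀ᶠ z : ℝ × ℝ in 𝓝 (0, 0),
      AnalyticAt ℝ (fun z : ℝ × ℝ => Q z.2 z.1) z ∧ |Q z.2 z.1| < κ := by
    have hsw : AnalyticAt ℝ (fun z : ℝ × ℝ => Q z.2 z.1) (0, 0) :=
      AnalyticAt.fun_comp (f := fun z : ℝ × ℝ => (z.2, z.1)) (x := (0, 0)) hQa
        (analyticAt_snd.prod analyticAt_fst)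
    have h0 : Q 0 0 = 0 := by rw [hQ0]; exact zero_pow hμ.ne'
    refine hsw.eventually_analyticAt.and ?_
    have := hsw.continuousAt.abs
    exact this.eventually (gt_mem_nhds (by simpa [h0] using hκ0))
  obtain ⟨ρ₁, hρ₁, hball⟩ := Metric.nhds_basis_closedBall.eventually_iff.1 hQs
  set r₀ : ℝ := min (1 / 4) (m / 4) with hr₀
  have hr₀pos : 0 < r₀ := by positivity
  set r : ℝ := min ρ₁ r₀ with hr
  have hrpos : 0 < r := by positivity
  have hr1 : r ≤ ρ₁ := min_le_left _ _
  have hr2 : r ≤ r₀ := min_le_right _ _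
  have hr3 : r₀ ≤ 1 / 4 := min_le_left _ _
  have hr4 : r₀ ≤ m / 4 := min_le_right _ _
  -- choice of ε₀
  have hρR : (0 : ℝ) < 1 / (ρ : ℝ) := by positivity
  have het : Tendsto (fun ε : ℝ => ε ^ (1 / (ρ : ℝ))) (𝓝 0) (𝓝 0) := by
    have := (Real.continuousAt_rpow_const 0 (1 / (ρ : ℝ)) (Or.inr hρR.le)).tendsto
    rwa [Real.zero_rpow hρR.ne'] at this
  have hev1 : ∀ᶠ ε : ℝ in 𝓝 0, |ε ^ (1 / (ρ : ℝ))| < ρ₁ := by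
    have := het.abs
    rw [abs_zero] at this
    exact this.eventually (gt_mem_nhds hρ₁)
  have hev2 : ∀ᶠ ε : ℝ in 𝓝 0, |σ (ε ^ (1 / (ρ : ℝ)))| < r₀ := by
    have h1 : Tendsto σ (𝓝 0) (𝓝 0) := by
      have := hσa.continuousAt.tendsto
      rwa [hσ0] at this
    have := (h1.comp het).abs
    rw [abs_zero] at this
    exact this.eventually (gt_mem_nhds hr₀pos)
  have hev3 : ∀ᶠ ε : ℝ in 𝓝 0, 0 < P 1 ε := by
    have h1 : ContinuousAt (fun ε => P 1 ε) 0 := by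
      have : (fun ε => P 1 ε) = fun ε => ∑ i ∈ Finset.range (μ + 2), p i ε * 1 ^ i := by
        funext ε; exact hPpoly 1 ε
      rw [this]
      exact tendsto_finsetSum _ fun i _ => (hpa i).continuousAt.mul continuousAt_const
    refine h1.eventually (lt_mem_nhds ?_)
    simp [hP0]
  have hevall := hroot.and (((hev1.and hev2).and hev3).filter_mono nhdsWithin_le_nhds)
  obtain ⟨ε₀, hε₀, hsub⟩ := (mem_nhdsGE_iff_exists_Icc_subset).1 hevall
  have hε₀' : 0 < ε₀ := hε₀
  refine ⟨ε₀, hε₀', ?_⟩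
  -- facts for each ε
  have hPcont : ∀ ε, Continuous fun x => P x ε := by
    intro ε
    simp only [hPpoly]
    fun_prop
  have hfacts : ∀ ε ∈ Icc (0 : ℝ) ε₀, |ε ^ (1 / (ρ : ℝ))| < ρ₁ ∧ |σ (ε ^ (1 / (ρ : ℝ)))| < r₀ ∧
      ∀ t ∈ Ioc (σ (ε ^ (1 / (ρ : ℝ)))) 1, 0 < P t ε := by
    intro ε hε
    obtain ⟨⟨_, hne⟩, ⟨h1, h2⟩, h3⟩ := hsub hε
    refine ⟨h1, h2, fun t ht => ?_⟩
    by_contra! hle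
    have hσl := (abs_lt.1 h2).1
    obtain ⟨y, hy, hy0⟩ := intermediate_value_Icc (f := fun x => P x ε) ht.2
      (hPcont ε).continuousOn (show (0 : ℝ) ∈ Icc _ _ from ⟨hle, h3.le⟩)
    exact hne y ⟨by linarith [ht.1, hy.1], hy.2⟩ (ht.1.trans_le hy.1) hy0
  -- the parameter space
  let ι := {τ : ℝ × E × ℝ × SeriesU //
    τ.1 ∈ Icc (0 : ℝ) ε₀ ∧ τ.2.1 ∈ Ka ∧ lam₀ ≤ τ.2.2.1 ∧ τ.2.2.2.norm ≤ 1}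
  let e : ι → ℝ := fun i => i.1.1 ^ (1 / (ρ : ℝ))
  let aa : ι → E := fun i => i.1.2.1
  let la : ι → ℝ := fun i => i.1.2.2.1
  let UU : ι → SeriesU := fun i => i.1.2.2.2
  have hla : ∀ i, lam₀ ≤ la i := fun i => i.2.2.2.1
  have hla0 : ∀ i, 0 < la i := fun i => hlam₀.trans_le (hla i)
  have hs1 : ∀ i : ι, ∀ s ∈ Ioo (-r) r, s + σ (e i) ∈ Icc (-1 : ℝ) 1 := by
    intro i s hs
    have h := abs_lt.1 (hfacts i.1.1 i.2.1).2.1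
    have h1 : -r₀ < σ (e i) := h.1
    have h2 : σ (e i) < r₀ := h.2
    constructor <;> linarith [hs.1, hs.2]
  have hmemQ : ∀ i : ι, ∀ s ∈ Ioo (-r) r, (e i, s) ∈ Metric.closedBall ((0, 0) : ℝ × ℝ) ρ₁ := by
    intro i s hs
    have h1 : |e i| < ρ₁ := (hfacts i.1.1 i.2.1).1
    have h2 : |s| < r := abs_lt.2 hs
    rw [Metric.mem_closedBall, Prod.dist_eq, Real.dist_eq, Real.dist_eq]
    simp only [sub_zero]
    exact max_le h1.le (h2.le.trans hr1)
  have BV : ∀ k, BF r k (fun (i : ι) s => V (aa i) (s + σ (e i))) := fun k =>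
    BF.analytic hKc aa (fun i => σ (e i)) (fun i s hs => ⟨i.2.2.1, hs1 i s hs⟩) k
      (fun z : E × ℝ => V z.1 z.2) (fun z hz => hVa z.1 (hKaA hz.1) z.2 hz.2)
  have BQ : ∀ k, BF r k (fun (i : ι) s => Q s (e i)) := fun k => by
    have := BF.analytic (isCompact_closedBall ((0, 0) : ℝ × ℝ) ρ₁) e (fun _ => 0)
      (fun i s hs => by simpa using hmemQ i s hs) k (fun z : ℝ × ℝ => Q z.2 z.1)
      (fun z hz => (hball hz).1)
    simpa using this
  have hinv : ∀ i : ι, |1 / la i| ≤ 1 / lam₀ := by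
    intro i
    rw [abs_of_pos (one_div_pos.2 (hla0 i))]
    exact one_div_le_one_div_of_le hlam₀ (hla i)
  have BVl : ∀ (l k : ℕ), BF r k
      (fun (i : ι) s => V (aa i) (s + σ (e i)) - (l / la i) * Q s (e i)) := by
    intro l k
    have h1 : BF r k (fun (i : ι) (_ : ℝ) => -((l : ℝ) / la i)) := by
      refine BF.const (c := fun i : ι => -((l : ℝ) / la i)) ⟨l * (1 / lam₀), fun i => ?_⟩
      rw [abs_neg, div_eq_mul_one_div, abs_mul, Nat.abs_cast]
      exact mul_le_mul_of_nonneg_left (hinv i) (Nat.cast_nonneg _)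
    refine ((BV k).add (h1.mul (BQ k))).congr fun i s _ => by ring
  have hVl : ∀ l ≤ ℓ + 1, ∀ i : ι, ∀ s ∈ Ioo (-r) r,
      v / 2 ≤ V (aa i) (s + σ (e i)) - (l / la i) * Q s (e i) := by
    intro l hl i s hs
    have h1 : v ≤ V (aa i) (s + σ (e i)) := hVv (aa i, s + σ (e i)) ⟨i.2.2.1, hs1 i s hs⟩
    have h2 : |Q s (e i)| < κ := (hball (hmemQ i s hs)).2
    have h3 : |(l / la i) * Q s (e i)| ≤ ((ℓ : ℝ) + 1) / lam₀ * κ := by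
      rw [abs_mul, abs_of_nonneg (div_nonneg (Nat.cast_nonneg _) (hla0 i).le)]
      refine mul_le_mul ?_ h2.le (abs_nonneg _) (by positivity)
      exact div_le_div₀ (by positivity) (by exact_mod_cast hl) hlam₀ (hla i)
    have h4 : ((ℓ : ℝ) + 1) / lam₀ * κ = v / 2 := by
      rw [hκ]; field_simp
    rw [h4] at h3
    linarith [(abs_le.1 h3).2]
  have BFl : ∀ l ≤ ℓ + 1, ∀ k, BF r k (fun (i : ι) s => F l s (e i) (aa i) (la i) (UU i)) := by
    intro l
    induction l with
    | zero =>
      intro _ k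
      have h1 := BF.series (ι := ι) (r := r) (fun i => σ (e i)) (fun i => by
        have : |σ (e i)| < r₀ := (hfacts i.1.1 i.2.1).2.1
        linarith) k 0 1 (fun i => (UU i).u) (fun i j => by
          simpa using SeriesU.coef_le i.2.2.2.2 j)
      have h2 : BF r k (fun (i : ι) (_ : ℝ) => 1 / la i) := BF.const ⟨_, hinv⟩
      exact (h2.mul h1).congr fun i s _ => hF0 _ _ _ _ _
    | succ l ih =>
      intro hl k
      have h1 := (ih (by omega) (k + 1)).mul
        ((BVl l (k + 1)).inv (half_pos hv) (hVl l (by omega)))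
      refine ((BVl l k).mul (h1.nabla hrpos)).congr fun i s _ => ?_
      rw [hFs]
      simp only [div_eq_mul_inv]
  -- coefficients bounds
  have h0r : (0 : ℝ) ∈ Ioo (-r) r := ⟨by linarith, hrpos⟩
  have hcb : ∀ j ∈ Finset.range (ℓ + 1), ∃ C, ∀ i : ι, |c j (e i) (aa i) (la i) (UU i)| ≤ C := by
    intro j hj
    have hj' : j ≤ ℓ + 1 := by have := Finset.mem_range.1 hj; omega
    obtain ⟨C, hC⟩ := ((BFl j hj' 0).mul ((BVl j 0).inv (half_pos hv) (hVl j hj'))).bdd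
    refine ⟨C, fun i => ?_⟩
    have := hC i 0 h0r
    rw [hcdef, div_eq_mul_inv]
    simpa using this
  choose! Cc hCc using hcb
  obtain ⟨CF, hCF⟩ := (BFl (ℓ + 1) le_rfl 0).bdd
  set s₁ : ℝ := r / 2 with hs₁
  have hs₁0 : 0 < s₁ := by positivity
  set MT : ℝ := 1 / (lam₀ * v) with hMT
  have hMT0 : 0 ≤ MT := by positivity
  set M : ℝ := max ((MT + ∑ j ∈ Finset.range (ℓ + 1), Cc j * s₁ ^ j) / s₁ ^ (ℓ + 1))
    (CF / (v / 2)) with hM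
  -- the uniform bound on the remainder
  have hbound : ∀ x₀ ∈ Kx, ∀ i : ι, ∀ s ∈ Ioc 0 s₁,
      |zf (fun s => yL P V (s + σ (e i)) x₀ i.1.1 (aa i) (la i) (UU i))
        (fun j => c j (e i) (aa i) (la i) (UU i)) (ℓ + 1) s| ≤ M := by
    intro x₀ hx₀ i
    obtain ⟨hf1, hf2, hf3⟩ := hfacts i.1.1 i.2.1
    have hσ1 : -r₀ < σ (e i) := (abs_lt.1 hf2).1
    have hσ2 : σ (e i) < r₀ := (abs_lt.1 hf2).2
    have hmx : m ≤ x₀ := hKm x₀ hx₀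
    have hsubI : Ioc (σ (e i)) 1 ⊆ Icc (-1 : ℝ) 1 := fun t ht => ⟨by linarith [ht.1], ht.2⟩
    have hVv' : ∀ t ∈ Icc (-1 : ℝ) 1, v ≤ V (aa i) t := fun t ht => hVv (aa i, t) ⟨i.2.2.1, ht⟩
    have hy := yL_aux P V (σ (e i)) x₀ i.1.1 (aa i) (la i) MT (UU i) (hla0 i) (hKx1 hx₀).2
      (hPcont _).continuousOn
      (fun t ht => by
        have h := (hVa (aa i) (hKaA i.2.2.1) t (hsubI ht)).continuousAt
        exact (ContinuousAt.comp (f := fun t : ℝ => (aa i, t)) h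
          (by fun_prop)).continuousWithinAt)
      ((UU i).eval_cont.mono hsubI) hf3 (fun t ht => hv.trans_le (hVv' t (hsubI ht))) hMT0
      (fun t ht => by
        have h1 := SeriesU.eval_le (U := UU i) i.2.2.2.2 (hsubI ht)
        have h2 := hVv' t (hsubI ht)
        rw [abs_mul]
        calc |1 / la i| * |(UU i).eval t| ≤ 1 / lam₀ * 1 := by
              gcongr; exact hinv i
          _ = MT * v := by rw [hMT]; field_simp
          _ ≤ MT * V (aa i) t := by gcongr)
    have hin : ∀ s ∈ Ioo 0 r, s + σ (e i) ∈ Ioo (σ (e i)) x₀ := fun s hs =>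
      ⟨by linarith [hs.1], by linarith [hs.2]⟩
    have hpow : e i ^ ρ = i.1.1 := by
      change (i.1.1 ^ (1 / (ρ : ℝ))) ^ ρ = i.1.1
      rw [one_div]
      exact Real.rpow_inv_natCast_pow i.2.1.1 hρ.ne'
    have hsQ : ∀ s, s * Q s (e i) = P (s + σ (e i)) i.1.1 := fun s => by rw [hQdef, hpow]
    have hsQpos : ∀ s ∈ Ioo 0 r, 0 < s * Q s (e i) := fun s hs => by
      rw [hsQ]
      have := hin s hs
      exact hf3 _ ⟨this.1, this.2.le.trans (hKx1 hx₀).2⟩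
    have hode := zf_ode (T := fun s => yL P V (s + σ (e i)) x₀ i.1.1 (aa i) (la i) (UU i))
      (v := fun s => V (aa i) (s + σ (e i))) (Q := fun s => Q s (e i))
      (F := fun l s => F l s (e i) (aa i) (la i) (UU i))
      (c := fun j => c j (e i) (aa i) (la i) (UU i)) (b := r) (hla0 i) (ℓ + 1)
      (fun s hs => by
        have := (hy _ (hin s hs)).1.comp_add_const s (σ (e i))
        simp only [hF0, hsQ]
        exact this)
      hsQpos
      (fun l hl s hs => by
        have hs' : s ∈ Ioo (-r) r := ⟨by linarith [hs.1], hs.2⟩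
        have h1 := (half_pos hv).trans_le (hVl l hl.le i s hs')
        have hs0 : s ≠ 0 := hs.1.ne'
        have h1' := h1.ne'
        rw [hFs, hcdef]
        simp only [nabla, hs0, if_false, zero_add]
        generalize F l 0 (e i) (aa i) (la i) (UU i) /
          (V (aa i) (σ (e i)) - ↑l / la i * Q 0 (e i)) = c0
        generalize V (aa i) (s + σ (e i)) - ↑l / la i * Q s (e i) = w at *
        field_simp)
    intro s hs
    refine max_abs_aux (p := fun s => s * Q s (e i))
      (v := fun s => V (aa i) (s + σ (e i)) - ((ℓ + 1 : ℕ) : ℝ) / la i * Q s (e i))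
      (f := fun s => F (ℓ + 1) s (e i) (aa i) (la i) (UU i)) (β := s₁) hs.2 (hla0 i) ?_ ?_ ?_ ?_ ?_ ?_
    · intro t ht
      exact (hode (ℓ + 1) le_rfl t
        ⟨hs.1.trans_le ht.1, by linarith [ht.2]⟩).continuousAt.continuousWithinAt
    · intro t ht
      exact hode (ℓ + 1) le_rfl t ⟨hs.1.trans_le ht.1, by linarith [ht.2]⟩
    · intro t ht
      exact hsQpos t ⟨hs.1.trans_le ht.1, by linarith [ht.2]⟩
    · intro t ht
      exact (half_pos hv).trans_le (hVl _ le_rfl i t ⟨by linarith [hs.1, ht.1], by linarith [ht.2]⟩)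
    · intro t ht
      have ht' : t ∈ Ioo (-r) r := ⟨by linarith [hs.1, ht.1], by linarith [ht.2]⟩
      have h1 := hCF i t ht'
      have h2 := hVl _ le_rfl i t ht'
      have hCF0 : 0 ≤ CF := (abs_nonneg _).trans h1
      have hM1 : CF / (v / 2) ≤ M := le_max_right _ _
      have hM0 : 0 ≤ M := le_trans (by positivity) hM1
      calc _ ≤ CF := h1
        _ = CF / (v / 2) * (v / 2) := by field_simp
        _ ≤ _ := mul_le_mul hM1 h2 (by positivity) hM0
    · refine le_trans ?_ (le_max_left _ _)
      simp only [zf]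
      rw [abs_div, abs_of_pos (pow_pos hs₁0 (ℓ + 1))]
      refine div_le_div_of_nonneg_right ?_ (by positivity)
      refine (abs_sub _ _).trans (add_le_add (hy _ (hin s₁ ⟨hs₁0, by linarith⟩)).2 ?_)
      refine (Finset.abs_sum_le_sum_abs _ _).trans (Finset.sum_le_sum fun j hj => ?_)
      rw [abs_mul, abs_of_pos (pow_pos hs₁0 j)]
      exact mul_le_mul_of_nonneg_right (hCc j hj i) (by positivity)
  -- conclusion
  intro δ hδ
  have hη : 0 < min s₁ (δ / (|M| + 1)) := by positivity
  filter_upwards [Ioo_mem_nhdsGT hη] with s hs x₀ hx₀ ε hε a ha lam hlam U hU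
  have hsa : s < s₁ := hs.2.trans_le (min_le_left _ _)
  have hsb : s < δ / (|M| + 1) := hs.2.trans_le (min_le_right _ _)
  have hb := hbound x₀ hx₀ ⟨(ε, a, lam, U), hε, ha, hlam, hU⟩ s ⟨hs.1, hsa.le⟩
  have heq : (yL P V (s + σ (ε ^ (1 / (ρ : ℝ)))) x₀ ε a lam U -
      ∑ j ∈ Finset.range (ℓ + 1), c j (ε ^ (1 / (ρ : ℝ))) a lam U * s ^ j) / s ^ ℓ =
      s * zf (fun s => yL P V (s + σ (ε ^ (1 / (ρ : ℝ)))) x₀ ε a lam U)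
        (fun j => c j (ε ^ (1 / (ρ : ℝ))) a lam U) (ℓ + 1) s := by
    have := hs.1.ne'
    simp only [zf]
    field_simp
    ring
  rw [heq, abs_mul, abs_of_pos hs.1]
  rw [lt_div_iff₀ (by positivity)] at hsb
  refine lt_of_le_of_lt ?_ hsb
  refine mul_le_mul_of_nonneg_left ?_ hs.1.le
  exact hb.trans (by linarith [le_abs_self M])

end
end
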